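/- arXiv:2108.13652 — 3 statements merged into one kernel-verified Lean document; each statement's English description precedes it below -/
import Mathlib

section
/- Let k be an algebraically closed field of characteristic 3 and let g = sl_3(k) be the Lie algebra of traceless 3×3 matrices over k. Then the second Chevalley–Eilenberg cohomology of g with trivial coefficients satisfies dim_k H^2(g, k) = 6. -/
/-! Chevalley–Eilenberg cohomology of a Lie algebra with coefficients in a module. -/

section ChevalleyEilenberg

variable (k : Type*) [Field k]
variable (g : Type*) [LieRing g] [LieAlgebra k g]
variable (M : Type*) [AddCommGroup M] [Module k M] [LieRingModule g M] [LieModule k g M]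

/-- The Chevalley–Eilenberg differential, as a raw function from alternating `n`-cochains
to `(n+1)`-ary functions:
`dψ(l₀,…,lₙ) = Σ_{i<j} (−1)^{i+j} ψ(⁅lᵢ,lⱼ⁆, …, l̂ᵢ, …, l̂ⱼ, …) + Σ_i (−1)^i ⁅lᵢ, ψ(…, l̂ᵢ, …)⁆`
(indices written from 0; this is the paper's formula with 1-based indices shifted by one). -/
def ceD : ∀ {n : ℕ}, (g [⋀^Fin n]→ₗ[k] M) → ((Fin (n + 1) → g) → M)
  | 0, ψ, v => ⁅v 0, ψ ![]⁆
  | (n + 1), ψ, v =>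
      (∑ i : Fin (n + 2), ∑ j : Fin (n + 2),
        if h : i < j then
          ((-1 : ℤ) ^ (i.val + j.val)) •
            ψ (Fin.cons ⁅v i, v j⁆
              (fun l => v (i.succAbove
                ((j.pred (Fin.pos_iff_ne_zero.mp (lt_of_le_of_lt i.zero_le h))).succAbove l))))
        else 0)
      + ∑ i : Fin (n + 2), ((-1 : ℤ) ^ i.val) • ⁅v i, ψ (fun l => v (i.succAbove l))⁆

variable {k g M}

private lemma dite_add_zero {P : Prop} [Decidable P] {N : Type*} [AddZeroClass N]
    (A B : P → N) :
    (dite P (fun h => A h + B h) fun _ => 0) =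
      (dite P A fun _ => 0) + (dite P B fun _ => 0) := by
  split_ifs <;> simp

private lemma dite_smul_zero {P : Prop} [Decidable P] {N : Type*} [AddCommGroup N] [Module k N]
    (c : k) (A : P → N) :
    (dite P (fun h => c • A h) fun _ => 0) = c • dite P A fun _ => 0 := by
  split_ifs <;> simp

lemma ceD_add {n : ℕ} (ψ φ : g [⋀^Fin n]→ₗ[k] M) (v : Fin (n + 1) → g) :
    ceD k g M (ψ + φ) v = ceD k g M ψ v + ceD k g M φ v := by
  cases n with
  | zero => simp [ceD]
  | succ n =>
    simp only [ceD, AlternatingMap.add_apply, smul_add, lie_add, dite_add_zero,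
      Finset.sum_add_distrib]
    abel

lemma ceD_smul {n : ℕ} (c : k) (ψ : g [⋀^Fin n]→ₗ[k] M) (v : Fin (n + 1) → g) :
    ceD k g M (c • ψ) v = c • ceD k g M ψ v := by
  cases n with
  | zero => simp [ceD]
  | succ n =>
    simp only [ceD, AlternatingMap.smul_apply, lie_smul, smul_comm _ c, dite_smul_zero,
      ← Finset.smul_sum, smul_add]

lemma ceD_zero {n : ℕ} (v : Fin (n + 1) → g) :
    ceD k g M (0 : g [⋀^Fin n]→ₗ[k] M) v = 0 := by
  cases n with
  | zero => simp [ceD]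
  | succ n => simp [ceD]

variable (k g M)

/-- The space of Chevalley–Eilenberg `n`-cocycles `Zⁿ(g, M)`. -/
def ceZ (n : ℕ) : Submodule k (g [⋀^Fin n]→ₗ[k] M) where
  carrier := {ψ | ∀ v, ceD k g M ψ v = 0}
  add_mem' := by
    intro ψ φ hψ hφ v
    rw [ceD_add, hψ v, hφ v, add_zero]
  zero_mem' := fun v => ceD_zero v
  smul_mem' := by
    intro c ψ hψ v
    rw [ceD_smul, hψ v, smul_zero]

/-- The space of Chevalley–Eilenberg `n`-coboundaries `Bⁿ(g, M)`: in positive degree, the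
alternating `n`-cochains that agree (as functions) with `dφ` for some `(n-1)`-cochain `φ`. -/
def ceB : (n : ℕ) → Submodule k (g [⋀^Fin n]→ₗ[k] M)
  | 0 => ⊥
  | (n + 1) =>
      { carrier := {ψ | ∃ φ : g [⋀^Fin n]→ₗ[k] M, ∀ v, ψ v = ceD k g M φ v}
        add_mem' := by
          rintro ψ χ ⟨φ₁, h₁⟩ ⟨φ₂, h₂⟩
          exact ⟨φ₁ + φ₂, fun v => by
            rw [AlternatingMap.add_apply, h₁ v, h₂ v, ceD_add]⟩
        zero_mem' := ⟨0, fun v => by rw [AlternatingMap.zero_apply, ceD_zero]⟩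
        smul_mem' := by
          rintro c ψ ⟨φ, h⟩
          exact ⟨c • φ, fun v => by rw [AlternatingMap.smul_apply, h v, ceD_smul]⟩ }

/-- The `n`-th Chevalley–Eilenberg cohomology space `Hⁿ(g, M)`: the quotient of the space of
`n`-cocycles by the space of `n`-coboundaries (viewed inside the cocycles). -/
abbrev ceH (n : ℕ) : Type _ :=
  ↥(ceZ k g M n) ⧸ (ceB k g M n).comap (ceZ k g M n).subtype

end ChevalleyEilenberg

/-- The Lie algebra `sl₃(k)` of traceless `3 × 3` matrices over `k`. -/
abbrev sl3 (k : Type*) [Field k] := ↥(LieAlgebra.SpecialLinear.sl (Fin 3) k)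

/-- `k` as the trivial one-dimensional module over `sl₃(k)` (zero bracket action). -/
instance (k : Type*) [Field k] : LieRingModule (sl3 k) k where
  bracket _ _ := 0
  add_lie _ _ _ := by simp
  lie_add _ _ _ := by simp
  leibniz_lie _ _ _ := by simp

instance (k : Type*) [Field k] : LieModule k (sl3 k) k where
  smul_lie _ _ _ := by simp [Bracket.bracket]
  lie_smul _ _ _ := by simp [Bracket.bracket]


namespace SL3

variable {k : Type*} [Field k]

lemma triv_lie (x : sl3 k) (c : k) : ⁅x, c⁆ = 0 := rfl

lemma fun1 (v : Fin 1 → sl3 k) : v = ![v 0] := by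
  ext i : 1; fin_cases i; rfl

lemma fun2 (v : Fin 2 → sl3 k) : v = ![v 0, v 1] := by
  ext i : 1; fin_cases i <;> rfl

lemma ceD_two (ψ : (sl3 k) [⋀^Fin 2]→ₗ[k] k) (v : Fin 3 → sl3 k) :
    ceD k (sl3 k) k ψ v =
      -ψ ![⁅v 0, v 1⁆, v 2] + ψ ![⁅v 0, v 2⁆, v 1] - ψ ![⁅v 1, v 2⁆, v 0] := by
  obtain ⟨F, hF⟩ : ∃ F : sl3 k → sl3 k → k, ∀ w : Fin 2 → sl3 k, ψ w = F (w 0) (w 1) :=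
    ⟨fun x y => ψ ![x, y], fun w => congrArg ψ (fun2 w)⟩
  simp only [ceD, triv_lie, hF]
  rw [Fin.sum_univ_three, Fin.sum_univ_three, Fin.sum_univ_three, Fin.sum_univ_three]
  simp [Fin.cons, Fin.succAbove, Fin.pred, Fin.subNat, Fin.lt_def]
  change -F ⁅v 0, v 1⁆ (v 2) + F ⁅v 0, v 2⁆ (v 1) + -F ⁅v 1, v 2⁆ (v 0) = _
  ring

lemma ceD_one (φ : (sl3 k) [⋀^Fin 1]→ₗ[k] k) (v : Fin 2 → sl3 k) :
    ceD k (sl3 k) k φ v = - φ ![⁅v 0, v 1⁆] := by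
  obtain ⟨F, hF⟩ : ∃ F : sl3 k → k, ∀ w : Fin 1 → sl3 k, φ w = F (w 0) :=
    ⟨fun x => φ ![x], fun w => congrArg φ (fun1 w)⟩
  simp only [ceD, triv_lie, hF]
  rw [Fin.sum_univ_two, Fin.sum_univ_two, Fin.sum_univ_two]
  simp

lemma tr0 (x : sl3 k) : x.1 0 0 + x.1 1 1 + x.1 2 2 = 0 := by
  have h : Matrix.trace x.1 = 0 := x.2
  rwa [Matrix.trace_fin_three] at h

/-- The traceless matrix with given coordinates. -/
def mk (v : Fin 8 → k) : sl3 k :=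
  ⟨!![v 0, v 2, v 3; v 4, v 1 - v 0, v 5; v 6, v 7, -v 1], by
    change Matrix.trace (_ : Matrix (Fin 3) (Fin 3) k) = 0
    rw [Matrix.trace_fin_three]; simp⟩

/-- Coordinates on `sl3`. -/
def coord : sl3 k ≃ₗ[k] (Fin 8 → k) where
  toFun x := ![x.1 0 0, -x.1 2 2, x.1 0 1, x.1 0 2, x.1 1 0, x.1 1 2, x.1 2 0, x.1 2 1]
  invFun v := mk v
  map_add' x y := by ext i; fin_cases i <;> simp <;> ring
  map_smul' c y := by ext i; fin_cases i <;> simp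
  left_inv x := by
    have h := tr0 x
    ext i j
    fin_cases i <;> fin_cases j <;> simp [mk]
    linear_combination -h
  right_inv v := by ext i; fin_cases i <;> simp [mk]

/-- The basis `h₁, h₂, e₀₁, e₀₂, e₁₀, e₁₂, e₂₀, e₂₁`. -/
noncomputable def bas : Module.Basis (Fin 8) k (sl3 k) := Module.Basis.ofEquivFun coord

lemma bas_eq (i : Fin 8) : (bas i : sl3 k) = mk (Pi.single i 1) := by
  simp [bas, coord]

lemma upd0 (x y z : sl3 k) : Function.update ![x, y] 0 z = ![z, y] := by
  ext i : 1; fin_cases i <;> rfl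

lemma upd1 (x y z : sl3 k) : Function.update ![x, y] 1 z = ![x, z] := by
  ext i : 1; fin_cases i <;> rfl

/-- Bilinear form attached to an alternating map. -/
def bil (ψ : (sl3 k) [⋀^Fin 2]→ₗ[k] k) : sl3 k →ₗ[k] sl3 k →ₗ[k] k :=
  LinearMap.mk₂ k (fun x y => ψ ![x, y])
    (fun x x' y => by
      have h := ψ.map_update_add ![x, y] 0 x x'
      simpa only [upd0, upd1] using h)
    (fun c x y => by
      have h := ψ.map_update_smul ![x, y] 0 c x
      simpa only [upd0, upd1] using h)
    (fun x y y' => by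
      have h := ψ.map_update_add ![x, y] 1 y y'
      simpa only [upd0, upd1] using h)
    (fun c x y => by
      have h := ψ.map_update_smul ![x, y] 1 c y
      simpa only [upd0, upd1] using h)

lemma bil_apply (ψ : (sl3 k) [⋀^Fin 2]→ₗ[k] k) (x y : sl3 k) : bil ψ x y = ψ ![x, y] := rfl

lemma bil_self (ψ : (sl3 k) [⋀^Fin 2]→ₗ[k] k) (x : sl3 k) : bil ψ x x = 0 :=
  ψ.map_eq_zero_of_eq ![x, x] (i := 0) (j := 1) rfl (by decide)

lemma bil_swap (ψ : (sl3 k) [⋀^Fin 2]→ₗ[k] k) (x y : sl3 k) : bil ψ x y = - bil ψ y x := by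
  have h := bil_self ψ (x + y)
  simp only [map_add, LinearMap.add_apply, bil_self] at h
  linear_combination h

/-- Elementary alternating form `x_{ij} y_{il} - x_{il} y_{ij}` and relatives. -/
def wedge (a b c d : Fin 3) : (sl3 k) [⋀^Fin 2]→ₗ[k] k where
  toFun v := (v 0).1 a b * (v 1).1 c d - (v 0).1 c d * (v 1).1 a b
  map_update_add' := by
    intro _ v i x y
    have : ‹DecidableEq (Fin 2)› = instDecidableEqFin 2 := Subsingleton.elim _ _
    subst this
    fin_cases i <;> simp <;> ring
  map_update_smul' := by
    intro _ v i x y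
    have : ‹DecidableEq (Fin 2)› = instDecidableEqFin 2 := Subsingleton.elim _ _
    subst this
    fin_cases i <;> simp <;> ring
  map_eq_zero_of_eq' := by
    intro v i j h hij
    have : v 0 = v 1 := by
      fin_cases i <;> fin_cases j <;> simp_all
    rw [this]; ring

lemma wedge_apply (a b c d : Fin 3) (x y : sl3 k) :
    wedge a b c d ![x, y] = x.1 a b * y.1 c d - x.1 c d * y.1 a b := rfl

lemma br (x y : sl3 k) (i j : Fin 3) : (⁅x, y⁆ : sl3 k).1 i j =
    (x.1 i 0 * y.1 0 j + x.1 i 1 * y.1 1 j + x.1 i 2 * y.1 2 j) -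
    (y.1 i 0 * x.1 0 j + y.1 i 1 * x.1 1 j + y.1 i 2 * x.1 2 j) := by
  change (x.1 * y.1 - y.1 * x.1) i j = _
  simp [Matrix.mul_apply, Fin.sum_univ_three]

lemma lie_bas {i j l : Fin 8}
    (h : (mk (Pi.single i 1) : sl3 k).1 * (mk (Pi.single j 1) : sl3 k).1
      - (mk (Pi.single j 1) : sl3 k).1 * (mk (Pi.single i 1) : sl3 k).1
      = (mk (Pi.single l 1) : sl3 k).1) :
    ⁅(bas i : sl3 k), (bas j : sl3 k)⁆ = bas l := by
  rw [bas_eq, bas_eq, bas_eq]; exact Subtype.ext h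

/-- First elements of the pairs of root vectors with root bracket. -/
def qa : Fin 8 → Fin 8 := ![2, 5, 3, 2, 5, 4, 7, 6]

/-- Second elements of the pairs of root vectors with root bracket. -/
def qb : Fin 8 → Fin 8 := ![4, 7, 7, 5, 6, 3, 4, 2]

lemma lie_q (l : Fin 8) : ⁅(bas (qa l) : sl3 k), (bas (qb l) : sl3 k)⁆ = bas l := by
  apply lie_bas
  ext i j
  fin_cases l <;> fin_cases i <;> fin_cases j <;>
    simp [mk, qa, qb]

/-- First elements of the six commuting pairs. -/
def pa : Fin 6 → Fin 8 := ![2, 4, 6, 4, 2, 3]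

/-- Second elements of the six commuting pairs. -/
def pb : Fin 6 → Fin 8 := ![3, 5, 7, 6, 7, 5]

lemma lie_p (l : Fin 6) : ⁅(bas (pa l) : sl3 k), (bas (pb l) : sl3 k)⁆ = 0 := by
  rw [bas_eq, bas_eq]
  apply Subtype.ext
  change (mk _ : sl3 k).1 * (mk _ : sl3 k).1 - (mk _ : sl3 k).1 * (mk _ : sl3 k).1 = 0
  ext i j
  fin_cases l <;> fin_cases i <;> fin_cases j <;>
    simp [mk, pa, pb]

set_option maxHeartbeats 1000000 in
lemma lie_h0 (m : Fin 8) :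
    ⁅(bas 0 : sl3 k), (bas m : sl3 k)⁆ = (![0, 0, 2, 1, -2, -1, -1, 1] m : k) • bas m := by
  rw [bas_eq, bas_eq]
  apply Subtype.ext
  change (mk _ : sl3 k).1 * (mk _ : sl3 k).1 - (mk _ : sl3 k).1 * (mk _ : sl3 k).1
    = _ • (mk _ : sl3 k).1
  ext i j
  fin_cases m <;> fin_cases i <;> fin_cases j <;> simp [mk] <;> norm_num

set_option maxHeartbeats 1000000 in
lemma lie_h1 (m : Fin 8) :
    ⁅(bas 1 : sl3 k), (bas m : sl3 k)⁆ = (![0, 0, -1, 1, 1, 2, -1, -2] m : k) • bas m := by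
  rw [bas_eq, bas_eq]
  apply Subtype.ext
  change (mk _ : sl3 k).1 * (mk _ : sl3 k).1 - (mk _ : sl3 k).1 * (mk _ : sl3 k).1
    = _ • (mk _ : sl3 k).1
  ext i j
  fin_cases m <;> fin_cases i <;> fin_cases j <;> simp [mk] <;> norm_num

lemma lie_h (a : Fin 8) (ha : a = 0 ∨ a = 1) (m : Fin 8) :
    ∃ c : k, ⁅(bas a : sl3 k), (bas m : sl3 k)⁆ = c • bas m := by
  rcases ha with rfl | rfl
  · exact ⟨_, lie_h0 m⟩
  · exact ⟨_, lie_h1 m⟩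

/-- A cocycle vanishing on the root pairs and the commuting pairs vanishes. -/
lemma rigid (L : sl3 k →ₗ[k] sl3 k →ₗ[k] k) (hs : ∀ x, L x x = 0)
    (hc : ∀ x y z, -L ⁅x, y⁆ z + L ⁅x, z⁆ y - L ⁅y, z⁆ x = 0)
    (hq : ∀ l, L (bas (qa l)) (bas (qb l)) = 0)
    (hp : ∀ l, L (bas (pa l)) (bas (pb l)) = 0) : L = 0 := by
  have sw : ∀ x y, L x y = 0 → L y x = 0 := by
    intro x y h0
    have h := hs (x + y)
    simp only [map_add, LinearMap.add_apply, hs] at h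
    linear_combination h - h0
  have hh : ∀ a : Fin 8, (a = 0 ∨ a = 1) → ∀ m, L (bas a) (bas m) = 0 := by
    intro a ha m
    apply sw
    have h := hc (bas a) (bas (qa m)) (bas (qb m))
    obtain ⟨c, h1⟩ := lie_h (k := k) a ha (qa m)
    obtain ⟨d, h2⟩ := lie_h (k := k) a ha (qb m)
    rw [lie_q, h1, h2] at h
    simp only [map_smul, LinearMap.smul_apply, hq, sw _ _ (hq m), smul_zero] at h
    linear_combination -h
  have h36 : L (bas 3) (bas 6) = 0 := by
    have h := hc (bas 2) (bas 5) (bas 6)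
    have e1 : ⁅(bas 2 : sl3 k), (bas 5 : sl3 k)⁆ = bas 3 := lie_q 3
    have e2 : ⁅(bas 6 : sl3 k), (bas 2 : sl3 k)⁆ = bas 7 := lie_q 7
    have e3 : ⁅(bas 5 : sl3 k), (bas 6 : sl3 k)⁆ = bas 4 := lie_q 4
    have h1 : L (bas 7) (bas 5) = 0 := sw _ _ (hq 1)
    have h2 : L (bas 4) (bas 2) = 0 := sw _ _ (hq 0)
    rw [e1, ← lie_skew, e2, e3, map_neg, LinearMap.neg_apply, h1, h2] at h
    linear_combination -h
  have hlt : ∀ i j : Fin 8, i < j → L (bas i) (bas j) = 0 := by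
    intro i j hij
    by_cases hi : i = 0 ∨ i = 1
    · exact hh i hi j
    have comb : (∃ l, i = qa l ∧ j = qb l) ∨ (∃ l, j = qa l ∧ i = qb l) ∨
        (∃ l, i = pa l ∧ j = pb l) ∨ (i = 3 ∧ j = 6) := by
      revert i j; decide
    rcases comb with ⟨l, rfl, rfl⟩ | ⟨l, rfl, rfl⟩ | ⟨l, rfl, rfl⟩ | ⟨rfl, rfl⟩
    · exact hq l
    · exact sw _ _ (hq l)
    · exact hp l
    · exact h36
  refine bas.ext fun i => bas.ext fun j => ?_
  rcases lt_trichotomy i j with h | rfl | h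
  · exact hlt i j h
  · exact hs _
  · exact sw _ _ (hlt j i h)

/-- Evaluation of a cocycle on the six commuting pairs. -/
noncomputable def ev : ceZ k (sl3 k) k 2 →ₗ[k] (Fin 6 → k) where
  toFun ψ l := ψ.1 ![bas (pa l), bas (pb l)]
  map_add' _ _ := rfl
  map_smul' _ _ := rfl

lemma ev_ker : LinearMap.ker (ev (k := k)) =
    (ceB k (sl3 k) k 2).comap (ceZ k (sl3 k) k 2).subtype := by
  ext ψ
  rw [LinearMap.mem_ker, Submodule.mem_comap]
  constructor
  · intro h
    let φ : sl3 k →ₗ[k] k := bas.constr k fun l => -ψ.1 ![bas (qa l), bas (qb l)]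
    have hφ : ∀ l, φ (bas l) = -ψ.1 ![bas (qa l), bas (qb l)] := fun l => by
      simp only [φ, Module.Basis.constr_basis]
    refine ⟨AlternatingMap.ofSubsingleton k (sl3 k) k (0 : Fin 1) φ, fun v => ?_⟩
    rw [ceD_one]
    let C : sl3 k →ₗ[k] sl3 k →ₗ[k] k :=
      LinearMap.mk₂ k (fun x y => φ ⁅x, y⁆) (by simp) (by simp) (by simp) (by simp)
    have hC : ∀ x y, C x y = φ ⁅x, y⁆ := fun _ _ => rfl
    have hL : bil ψ.1 + C = 0 := by
      apply rigid
      · intro x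
        simp [bil_self, hC]
      · intro x y z
        have h1 := ψ.2 ![x, y, z]
        rw [ceD_two] at h1
        have h2 := congrArg φ (lie_jacobi x y z)
        have e1 : ⁅x, ⁅y, z⁆⁆ = -⁅⁅y, z⁆, x⁆ := (lie_skew _ _).symm
        have e2 : ⁅y, ⁅z, x⁆⁆ = ⁅⁅x, z⁆, y⁆ := by
          rw [← lie_skew y, ← lie_skew z x, neg_lie, neg_neg]
        have e3 : ⁅z, ⁅x, y⁆⁆ = -⁅⁅x, y⁆, z⁆ := (lie_skew _ _).symm
        rw [e1, e2, e3] at h2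
        simp only [map_add, map_neg, map_zero] at h2
        simp only [LinearMap.add_apply, hC, bil_apply]
        simp only [Matrix.cons_val] at h1
        linear_combination h1 + h2
      · intro l
        rw [LinearMap.add_apply, LinearMap.add_apply, hC, lie_q, hφ, bil_apply]
        ring
      · intro l
        rw [LinearMap.add_apply, LinearMap.add_apply, hC, lie_p, bil_apply, map_zero, add_zero]
        exact congrFun h l
    have h0 : bil ψ.1 (v 0) (v 1) + C (v 0) (v 1) = 0 := by
      rw [← LinearMap.add_apply, ← LinearMap.add_apply, hL]; rfl
    rw [hC, bil_apply, ← fun2 v] at h0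
    exact eq_neg_of_add_eq_zero_left h0
  · rintro ⟨φ, h⟩
    ext l
    refine (h _).trans ?_
    rw [ceD_one]
    have e : ⁅(![(bas (pa l) : sl3 k), bas (pb l)] : Fin 2 → sl3 k) 0,
        (![(bas (pa l) : sl3 k), bas (pb l)] : Fin 2 → sl3 k) 1⁆ = 0 := lie_p l
    rw [e]
    have : φ ![0] = 0 := φ.map_coord_zero 0 rfl
    rw [this]; simp

/-- Matrix positions of the root basis vectors: rows. -/
def ro : Fin 8 → Fin 3 := ![0, 2, 0, 0, 1, 1, 2, 2]

/-- Matrix positions of the root basis vectors: columns. -/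
def co : Fin 8 → Fin 3 := ![0, 2, 1, 2, 0, 2, 0, 1]

/-- The six basic cocycles. -/
def cyc (l : Fin 6) : (sl3 k) [⋀^Fin 2]→ₗ[k] k :=
  wedge (ro (pa l)) (co (pa l)) (ro (pb l)) (co (pb l))

lemma cyc_mem [CharP k 3] (l : Fin 6) : cyc l ∈ ceZ k (sl3 k) k 2 := by
  intro v
  have h3 : (3 : k) = 0 := by exact_mod_cast CharP.cast_eq_zero k 3
  rw [ceD_two]
  have hx := tr0 (v 0)
  have hy := tr0 (v 1)
  have hz := tr0 (v 2)
  generalize v 0 = x at *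
  generalize v 1 = y at *
  generalize v 2 = z at *
  simp only [cyc, wedge_apply, br]
  have ex : x.1 2 2 = - x.1 0 0 - x.1 1 1 := by linear_combination hx
  have ey : y.1 2 2 = - y.1 0 0 - y.1 1 1 := by linear_combination hy
  have ez : z.1 2 2 = - z.1 0 0 - z.1 1 1 := by linear_combination hz
  fin_cases l <;> simp [ro, co, pa, pb, ex, ey, ez] <;> grind

lemma ev_surj [CharP k 3] : Function.Surjective (ev (k := k)) := by
  intro t
  refine ⟨∑ l, t l • ⟨cyc l, cyc_mem l⟩, ?_⟩
  have hc : ∀ l, ev (k := k) ⟨cyc l, cyc_mem l⟩ = Pi.single l 1 := by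
    intro l
    ext m
    change cyc l ![bas (pa m), bas (pb m)] = _
    rw [bas_eq, bas_eq, cyc, wedge_apply]
    fin_cases l <;> fin_cases m <;> simp [mk, pa, pb, ro, co]
  rw [map_sum]
  simp only [map_smul, hc]
  ext m
  simp [Pi.single_apply]

lemma finrank_six {V : Type*} [AddCommGroup V] [Module k V] (Z B : Submodule k V)
    (f : Z →ₗ[k] (Fin 6 → k)) (hf : Function.Surjective f)
    (hk : LinearMap.ker f = B.comap Z.subtype) :
    Module.finrank k (Z ⧸ B.comap Z.subtype) = 6 := by
  rw [← hk, (LinearMap.quotKerEquivOfSurjective f hf).finrank_eq]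
  simp

end SL3

theorem H2_trivial_coeffs_dim (k : Type*) [Field k] [IsAlgClosed k] [CharP k 3] :
    Module.finrank k (ceH k (sl3 k) k 2) = 6 := by
  exact SL3.finrank_six (V := (sl3 k) [⋀^Fin 2]→ₗ[k] k) (ceZ k (sl3 k) k 2) (ceB k (sl3 k) k 2)
    (SL3.ev (k := k)) (SL3.ev_surj (k := k)) (SL3.ev_ker (k := k))
end

section
/- Let k be an algebraically closed field of characteristic 3 and let g = sl_3(k) be the Lie algebra of traceless 3×3 matrices over k. Then the third Chevalley–Eilenberg cohomology of g with trivial coefficients satisfies dim_k H^3(g, k) = 7. -/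
namespace H3aux

/-! ### Generic facts -/

section generic

variable {k : Type*} [Field k] {L : Type*} [LieRing L] [LieAlgebra k L]

/-- Alternating maps agreeing on increasing families of basis vectors are equal. -/
lemma ext_sorted {n m : ℕ} (b : Module.Basis (Fin m) k L) {f g : L [⋀^Fin n]→ₗ[k] k}
    (h : ∀ v : Fin n → Fin m, StrictMono v → f (b ∘ v) = g (b ∘ v)) : f = g := by
  refine Module.Basis.ext_alternating b fun v hv => ?_
  have hs : StrictMono (v ∘ Tuple.sort v) :=
    (Tuple.monotone_sort v).strictMono_of_injective (hv.comp (Tuple.sort v).injective)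
  have h1 := h _ hs
  rw [← Function.comp_assoc, f.map_perm, g.map_perm] at h1
  have h2 := congrArg (fun x => (Equiv.Perm.sign (Tuple.sort v))⁻¹ • x) h1
  simp only [smul_smul, inv_mul_cancel, one_smul] at h2
  exact h2

section slots
variable (ψ : L [⋀^Fin 3]→ₗ[k] k) (φ : L [⋀^Fin 2]→ₗ[k] k) (a a' b b' c c' : L) (r : k)

lemma upd0 {X : Type*} (a b c x : X) : Function.update ![a, b, c] 0 x = ![x, b, c] := by
  ext i; fin_cases i <;> rfl
lemma upd1 {X : Type*} (a b c x : X) : Function.update ![a, b, c] 1 x = ![a, x, c] := by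
  ext i; fin_cases i <;> rfl
lemma upd2 {X : Type*} (a b c x : X) : Function.update ![a, b, c] 2 x = ![a, b, x] := by
  ext i; fin_cases i <;> rfl
lemma wpd0 {X : Type*} (a b x : X) : Function.update ![a, b] 0 x = ![x, b] := by
  ext i; fin_cases i <;> rfl
lemma wpd1 {X : Type*} (a b x : X) : Function.update ![a, b] 1 x = ![a, x] := by
  ext i; fin_cases i <;> rfl
lemma t_add0 : ψ ![a + a', b, c] = ψ ![a, b, c] + ψ ![a', b, c] := by
  simpa only [upd0, smul_eq_mul] using ψ.map_update_add ![a, b, c] 0 a a'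
lemma t_add1 : ψ ![a, b + b', c] = ψ ![a, b, c] + ψ ![a, b', c] := by
  simpa only [upd1, smul_eq_mul] using ψ.map_update_add ![a, b, c] 1 b b'
lemma t_add2 : ψ ![a, b, c + c'] = ψ ![a, b, c] + ψ ![a, b, c'] := by
  simpa only [upd2, smul_eq_mul] using ψ.map_update_add ![a, b, c] 2 c c'
lemma t_smul0 : ψ ![r • a, b, c] = r * ψ ![a, b, c] := by
  simpa only [upd0, smul_eq_mul] using ψ.map_update_smul ![a, b, c] 0 r a
lemma t_smul1 : ψ ![a, r • b, c] = r * ψ ![a, b, c] := by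
  simpa only [upd1, smul_eq_mul] using ψ.map_update_smul ![a, b, c] 1 r b
lemma t_smul2 : ψ ![a, b, r • c] = r * ψ ![a, b, c] := by
  simpa only [upd2, smul_eq_mul] using ψ.map_update_smul ![a, b, c] 2 r c
lemma t_swap01 : ψ ![b, a, c] = -ψ ![a, b, c] := by
  have := ψ.map_swap ![a, b, c] (i := 0) (j := 1) (by decide)
  rw [← this]; congr 1; ext i; fin_cases i <;> rfl
lemma t_swap12 : ψ ![a, c, b] = -ψ ![a, b, c] := by
  have := ψ.map_swap ![a, b, c] (i := 1) (j := 2) (by decide)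
  rw [← this]; congr 1; ext i; fin_cases i <;> rfl
lemma t_eq01 : ψ ![a, a, c] = 0 :=
  ψ.map_eq_zero_of_eq ![a, a, c] (i := 0) (j := 1) rfl (by decide)
lemma t_eq12 : ψ ![a, b, b] = 0 :=
  ψ.map_eq_zero_of_eq ![a, b, b] (i := 1) (j := 2) rfl (by decide)
lemma t_eq02 : ψ ![a, b, a] = 0 :=
  ψ.map_eq_zero_of_eq ![a, b, a] (i := 0) (j := 2) rfl (by decide)
lemma t_zero0 : ψ ![0, b, c] = 0 := ψ.map_coord_zero 0 rfl
lemma t_neg0 : ψ ![-a, b, c] = -ψ ![a, b, c] := by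
  rw [← neg_one_smul k, t_smul0]; ring

lemma u_add0 : φ ![a + a', b] = φ ![a, b] + φ ![a', b] := by
  simpa only [wpd0, smul_eq_mul] using φ.map_update_add ![a, b] 0 a a'
lemma u_add1 : φ ![a, b + b'] = φ ![a, b] + φ ![a, b'] := by
  simpa only [wpd1, smul_eq_mul] using φ.map_update_add ![a, b] 1 b b'
lemma u_smul0 : φ ![r • a, b] = r * φ ![a, b] := by
  simpa only [wpd0, smul_eq_mul] using φ.map_update_smul ![a, b] 0 r a
lemma u_smul1 : φ ![a, r • b] = r * φ ![a, b] := by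
  simpa only [wpd1, smul_eq_mul] using φ.map_update_smul ![a, b] 1 r b
lemma u_swap : φ ![b, a] = -φ ![a, b] := by
  have := φ.map_swap ![a, b] (i := 0) (j := 1) (by decide)
  rw [← this]; congr 1; ext i; fin_cases i <;> rfl
lemma u_eq : φ ![a, a] = 0 :=
  φ.map_eq_zero_of_eq ![a, a] (i := 0) (j := 1) rfl (by decide)
lemma u_zero0 : φ ![0, b] = 0 := φ.map_coord_zero 0 rfl
lemma u_neg0 : φ ![-a, b] = -φ ![a, b] := by
  rw [← neg_one_smul k, u_smul0]; ring
end slots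

/-- The differential of a 2-cochain with trivial coefficients, as an alternating map. -/
def D2 (φ : L [⋀^Fin 2]→ₗ[k] k) : L [⋀^Fin 3]→ₗ[k] k where
  toFun v := -φ ![⁅v 0, v 1⁆, v 2] + φ ![⁅v 0, v 2⁆, v 1] - φ ![⁅v 1, v 2⁆, v 0]
  map_update_add' {inst} v i x y := by
    obtain rfl : inst = (instDecidableEqFin 3) := Subsingleton.elim _ _
    fin_cases i <;> simp [u_add0, u_add1] <;> ring
  map_update_smul' {inst} v i c x := by
    obtain rfl : inst = (instDecidableEqFin 3) := Subsingleton.elim _ _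
    fin_cases i <;> simp [u_smul0, u_smul1] <;> ring
  map_eq_zero_of_eq' v i j h hij := by
    have hs : ∀ x y z : L, φ ![⁅x, y⁆, z] = -φ ![⁅y, x⁆, z] := fun x y z => by
      rw [← lie_skew, u_neg0]
    fin_cases i <;> fin_cases j <;> first | exact absurd rfl hij | skip
    all_goals simp at h; simp [h, u_zero0]
    · rw [hs]; ring
    · rw [hs]; ring

/-- The differential of a 3-cochain with trivial coefficients, as an alternating map. -/
def D3 (ψ : L [⋀^Fin 3]→ₗ[k] k) : L [⋀^Fin 4]→ₗ[k] k where
  toFun v := -ψ ![⁅v 0, v 1⁆, v 2, v 3] + ψ ![⁅v 0, v 2⁆, v 1, v 3] - ψ ![⁅v 0, v 3⁆, v 1, v 2]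
    - ψ ![⁅v 1, v 2⁆, v 0, v 3] + ψ ![⁅v 1, v 3⁆, v 0, v 2] - ψ ![⁅v 2, v 3⁆, v 0, v 1]
  map_update_add' {inst} v i x y := by
    obtain rfl : inst = (instDecidableEqFin 4) := Subsingleton.elim _ _
    fin_cases i <;> simp [t_add0, t_add1, t_add2] <;> ring
  map_update_smul' {inst} v i c x := by
    obtain rfl : inst = (instDecidableEqFin 4) := Subsingleton.elim _ _
    fin_cases i <;> simp [t_smul0, t_smul1, t_smul2] <;> ring
  map_eq_zero_of_eq' v i j h hij := by
    have hs : ∀ x y z w : L, ψ ![⁅x, y⁆, z, w] = -ψ ![⁅y, x⁆, z, w] := fun x y z w => by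
      rw [← lie_skew, t_neg0]
    have aux : ∀ i j : Fin 4, i < j → v i = v j →
      -ψ ![⁅v 0, v 1⁆, v 2, v 3] + ψ ![⁅v 0, v 2⁆, v 1, v 3] - ψ ![⁅v 0, v 3⁆, v 1, v 2]
        - ψ ![⁅v 1, v 2⁆, v 0, v 3] + ψ ![⁅v 1, v 3⁆, v 0, v 2] - ψ ![⁅v 2, v 3⁆, v 0, v 1] = 0 := by
      intro i j hij h
      fin_cases i <;> fin_cases j <;> first | exact absurd hij (by decide) | skip
      all_goals simp at h; simp only [h, lie_self, t_zero0, t_eq12]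
      · ring
      · rw [hs (v 2) (v 1), t_swap12 ψ _ (v 1) (v 2)]; ring
      · rw [hs (v 3) (v 1), hs (v 3) (v 2), t_swap12 ψ _ (v 1) (v 3), t_swap12 ψ _ (v 2) (v 3)]
        ring
      · ring
      · rw [hs (v 3) (v 2), t_swap12 ψ _ (v 2) (v 3)]; ring
      · ring
    rcases lt_or_gt_of_ne hij with h' | h'
    · exact aux i j h' h
    · exact aux j i h' h.symm

end generic

/-! ### Combinatorial data -/

/-- Triples of basis indices. -/
abbrev T3 := Fin 8 × Fin 8 × Fin 8
/-- Quadruples of basis indices. -/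
abbrev T4 := Fin 8 × Fin 8 × Fin 8 × Fin 8

/-- The integral matrices whose images form our basis of `sl₃`. -/
def B : Fin 8 → Matrix (Fin 3) (Fin 3) ℤ :=
  ![!![0, 1, 0; 0, 0, 0; 0, 0, 0], !![0, 0, 1; 0, 0, 0; 0, 0, 0],
    !![0, 0, 0; 1, 0, 0; 0, 0, 0], !![0, 0, 0; 0, 0, 1; 0, 0, 0],
    !![0, 0, 0; 0, 0, 0; 1, 0, 0], !![0, 0, 0; 0, 0, 0; 0, 1, 0],
    !![1, 0, 0; 0, 0, 0; 0, 0, -1], !![0, 0, 0; 0, 1, 0; 0, 0, -1]]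

/-- The nonzero brackets of basis vectors, in coordinates, for `i < j`. -/
def brT : List ((Fin 8 × Fin 8) × List (ℤ × Fin 8)) :=
  [((0, 2), [(1, 6), (-1, 7)]), ((0, 3), [(1, 1)]), ((0, 4), [(-1, 5)]), ((0, 6), [(-1, 0)]),
   ((0, 7), [(1, 0)]), ((1, 2), [(-1, 3)]), ((1, 4), [(1, 6)]), ((1, 5), [(1, 0)]),
   ((1, 6), [(-2, 1)]), ((1, 7), [(-1, 1)]), ((2, 5), [(-1, 4)]), ((2, 6), [(1, 2)]),
   ((2, 7), [(-1, 2)]), ((3, 4), [(1, 2)]), ((3, 5), [(1, 7)]), ((3, 6), [(-1, 3)]),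
   ((3, 7), [(-2, 3)]), ((4, 6), [(2, 4)]), ((4, 7), [(1, 4)]), ((5, 6), [(1, 5)]),
   ((5, 7), [(2, 5)])]

/-- The contracting homotopy `C³ → C²`, as a sparse table. -/
def hT : List ((Fin 8 × Fin 8) × List (ℤ × T3)) :=
  [((0, 3), [(1, 0, 1, 2), (-1, 0, 3, 6)]), ((0, 6), [(1, 0, 1, 4)]),
   ((1, 2), [(-1, 0, 2, 3), (1, 1, 2, 6)]), ((2, 5), [(-1, 0, 2, 4), (1, 2, 5, 6)]),
   ((0, 4), [(1, 0, 2, 5), (-1, 0, 4, 6)]), ((6, 7), [(-1, 0, 2, 6)]), ((0, 2), [(1, 0, 3, 4)]),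
   ((0, 7), [(1, 0, 3, 5)]), ((1, 6), [(1, 0, 3, 6), (1, 0, 1, 2)]),
   ((5, 6), [(-1, 0, 4, 6), (-1, 0, 2, 5)]), ((2, 6), [(-1, 1, 2, 4)]),
   ((3, 6), [(-1, 1, 2, 6), (-1, 0, 2, 3)]), ((2, 7), [(1, 2, 3, 5)]),
   ((4, 6), [(-1, 2, 5, 6), (-1, 0, 2, 4)])]

/-- The contracting homotopy `C⁴ → C³`, as a sparse table. -/
def cT : List (T3 × List (ℤ × T4)) :=
  [((0, 1, 3), [(1, 0, 1, 3, 6)]), ((0, 1, 5), [(-1, 0, 1, 5, 6)]), ((0, 1, 7), [(-1, 0, 1, 3, 5)]),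
   ((0, 2, 7), [(-1, 0, 3, 4, 6), (-1, 0, 3, 4, 7), (-1, 1, 3, 4, 5), (1, 0, 2, 3, 5)]),
   ((0, 3, 7), [(-1, 0, 1, 2, 7), (1, 0, 1, 2, 6)]), ((0, 4, 5), [(1, 0, 4, 5, 6)]),
   ((0, 4, 7), [(-1, 0, 2, 5, 7), (1, 0, 2, 5, 6)]), ((0, 5, 6), [(-1, 0, 1, 4, 5)]),
   ((0, 6, 7), [(-1, 0, 1, 4, 6), (1, 0, 1, 2, 5), (1, 0, 1, 4, 7)]),
   ((1, 2, 3), [(-1, 1, 2, 3, 6)]),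
   ((1, 2, 5), [(-1, 1, 3, 4, 5), (1, 0, 3, 4, 6), (-1, 0, 1, 2, 4)]),
   ((1, 2, 7), [(1, 0, 2, 3, 7), (-1, 0, 2, 3, 6)]),
   ((1, 3, 4), [(-1, 0, 2, 3, 7), (1, 0, 2, 3, 6), (-1, 1, 2, 3, 5)]),
   ((1, 3, 5), [(1, 0, 1, 3, 4)]), ((1, 3, 7), [(-1, 0, 1, 2, 3)]),
   ((1, 4, 5), [(-1, 0, 2, 5, 7), (1, 0, 2, 5, 6), (-1, 0, 3, 4, 5)]),
   ((1, 4, 7), [(1, 0, 3, 4, 6), (-1, 1, 3, 4, 5), (1, 0, 1, 2, 4)]),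
   ((1, 5, 6), [(1, 0, 1, 4, 6)]), ((1, 5, 7), [(1, 0, 1, 4, 6), (-1, 0, 1, 2, 5)]),
   ((1, 6, 7), [(-1, 0, 1, 2, 6)]), ((2, 3, 4), [(1, 2, 3, 4, 6)]), ((2, 3, 6), [(-1, 1, 2, 3, 4)]),
   ((2, 4, 5), [(-1, 2, 4, 5, 6)]), ((2, 4, 7), [(1, 2, 3, 4, 5)]),
   ((2, 5, 7), [(1, 0, 2, 4, 7), (-1, 0, 2, 4, 6)]),
   ((2, 6, 7), [(1, 1, 2, 4, 6), (1, 0, 2, 3, 4), (-1, 1, 2, 4, 7)]),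
   ((3, 4, 5), [(1, 1, 2, 4, 5)]), ((3, 4, 6), [(1, 1, 2, 4, 6)]),
   ((3, 4, 7), [(1, 1, 2, 4, 6), (1, 0, 2, 3, 4)]), ((3, 5, 6), [(1, 0, 3, 4, 6)]),
   ((3, 5, 7), [(-1, 0, 3, 4, 7), (-1, 0, 2, 3, 5), (-1, 0, 3, 4, 6), (1, 0, 1, 2, 4)]),
   ((3, 6, 7), [(1, 0, 2, 3, 6)]), ((4, 5, 7), [(1, 0, 2, 4, 5)]), ((4, 6, 7), [(1, 0, 2, 4, 6)]),
   ((5, 6, 7), [(1, 0, 2, 5, 6)])]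

/-- The part of the homotopy identity coming from the cohomology classes. -/
def fT : List (T3 × List (ℤ × Fin 7)) :=
  [((0, 1, 6), [(1, 0)]), ((0, 2, 7), [(-1, 3)]), ((0, 5, 7), [(1, 1)]), ((1, 2, 5), [(-1, 3)]),
   ((1, 3, 6), [(1, 2)]), ((1, 3, 7), [(1, 2)]), ((1, 4, 6), [(1, 3)]), ((2, 3, 7), [(1, 4)]),
   ((2, 4, 6), [(1, 5)]), ((3, 5, 6), [(1, 3)]), ((3, 5, 7), [(1, 3)]), ((4, 5, 6), [(1, 6)]),
   ((4, 5, 7), [(1, 6)])]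

/-- The basis triples on which the cohomology classes are detected. -/
def Fs : Fin 7 → T3 :=
  ![(0, 1, 6), (0, 5, 7), (1, 3, 6), (1, 4, 6), (2, 3, 7), (2, 4, 6), (4, 5, 6)]

/-- Cocycles representing a basis of the third cohomology. -/
def Ss : Fin 7 → List (ℤ × T3) :=
  ![[(1, 0, 1, 6)], [(1, 0, 5, 7)], [(1, 1, 3, 7), (1, 1, 3, 6)], [(1, 3, 5, 7), (1, 0, 2, 6), (1, 0, 3, 4), (1, 1, 4, 6), (1, 1, 4, 7)], [(1, 2, 3, 7)], [(1, 2, 4, 6)], [(1, 4, 5, 7), (1, 4, 5, 6)]]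

/-- Look up an entry of a sparse table. -/
def look {κ β : Type} [DecidableEq κ] (l : List (κ × List β)) (x : κ) : List β :=
  match l with
  | [] => []
  | y :: l => if y.1 = x then y.2 else look l x

/-- Multiply a formal linear combination by a scalar. -/
def scl {κ : Type} (c : ℤ) (l : List (ℤ × κ)) : List (ℤ × κ) := l.map fun x => (c * x.1, x.2)

/-- The bracket of two basis vectors as a formal linear combination. -/
def br (i j : Fin 8) : List (ℤ × Fin 8) := look brT (i, j) ++ scl (-1) (look brT (j, i))

lemma br_spec : ∀ i j : Fin 8,
    B i * B j - B j * B i = ((br i j).map fun x => x.1 • B x.2).sum := by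
  decide +kernel

/-- Substitute a basis index into a slot, with a sign. -/
def sub {κ : Type} (c : ℤ) (l : List (ℤ × Fin 8)) (f : Fin 8 → κ) : List (ℤ × κ) :=
  l.map fun x => (c * x.1, f x.2)

/-- The differential `C² → C³` evaluated at a basis triple. -/
def d2l (J : T3) : List (ℤ × (Fin 8 × Fin 8)) :=
  sub (-1) (br J.1 J.2.1) (fun x => (x, J.2.2)) ++ sub 1 (br J.1 J.2.2) (fun x => (x, J.2.1)) ++
    sub (-1) (br J.2.1 J.2.2) (fun x => (x, J.1))

/-- The differential `C³ → C⁴` evaluated at a basis quadruple. -/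
def d3l (Q : T4) : List (ℤ × T3) :=
  sub (-1) (br Q.1 Q.2.1) (fun x => (x, Q.2.2.1, Q.2.2.2)) ++
  sub 1 (br Q.1 Q.2.2.1) (fun x => (x, Q.2.1, Q.2.2.2)) ++
  sub (-1) (br Q.1 Q.2.2.2) (fun x => (x, Q.2.1, Q.2.2.1)) ++
  sub (-1) (br Q.2.1 Q.2.2.1) (fun x => (x, Q.1, Q.2.2.2)) ++
  sub 1 (br Q.2.1 Q.2.2.2) (fun x => (x, Q.1, Q.2.2.1)) ++
  sub (-1) (br Q.2.2.1 Q.2.2.2) (fun x => (x, Q.1, Q.2.1))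

/-- The homotopy applied to a generic 3-cochain, evaluated at a basis pair. -/
def hl (p : Fin 8 × Fin 8) : List (ℤ × T3) := look hT p ++ scl (-1) (look hT (p.2, p.1))

/-- Substitute linear combinations into a linear combination. -/
def bnd {κ κ' : Type} (l : List (ℤ × κ)) (f : κ → List (ℤ × κ')) : List (ℤ × κ') :=
  l.flatMap fun x => scl x.1 (f x.2)

/-- Sort the first two slots. -/
def s12 (x : ℤ × T3) : ℤ × T3 :=
  if x.2.1 < x.2.2.1 then x else if x.2.2.1 < x.2.1 then (-x.1, x.2.2.1, x.2.1, x.2.2.2)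
  else (0, x.2)

/-- Sort the last two slots. -/
def s23 (x : ℤ × T3) : ℤ × T3 :=
  if x.2.2.1 < x.2.2.2 then x else if x.2.2.2 < x.2.2.1 then (-x.1, x.2.1, x.2.2.2, x.2.2.1)
  else (0, x.2)

/-- Insert a term into a linear combination, collecting equal terms. -/
def ins (x : ℤ × T3) : List (ℤ × T3) → List (ℤ × T3)
  | [] => [x]
  | y :: l => if x.2 = y.2 then (x.1 + y.1, y.2) :: l else y :: ins x l

/-- Normal form of a linear combination of values of an alternating map. -/
def nf : List (ℤ × T3) → List (ℤ × T3)
  | [] => []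
  | x :: l => ins (s12 (s23 (s12 x))) (nf l)

/-- The homotopy identity at the basis triple `J`. -/
def idl (J : T3) : List (ℤ × T3) :=
  (1, J) :: (scl (-1) (bnd (d2l J) hl) ++
    scl (-1) (bnd (look cT J) d3l ++ bnd (look fT J) fun a => [(1, Fs a)]))

lemma idl_spec : ∀ i j : Fin 8, i < j → ∀ l, j < l → ∀ x ∈ nf (idl (i, j, l)), x.1 % 3 = 0 := by
  decide +kernel

/-- Kronecker delta. -/
def dl (i j : Fin 8) : ℤ := if i = j then 1 else 0

/-- A product of three Kronecker deltas, evaluated lazily. -/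
def tm (a b c x y z : Fin 8) : ℤ := if a = x then if b = y then dl c z else 0 else 0

lemma tm_eq (a b c x y z : Fin 8) : tm a b c x y z = dl a x * dl b y * dl c z := by
  unfold tm dl; split_ifs <;> simp

/-- The value of the elementary form `I` at the basis triple `K`. -/
def e3 (I K : T3) : ℤ :=
  tm I.1 I.2.1 I.2.2 K.1 K.2.1 K.2.2 - tm I.1 I.2.1 I.2.2 K.1 K.2.2 K.2.1
  - tm I.1 I.2.1 I.2.2 K.2.1 K.1 K.2.2 + tm I.1 I.2.1 I.2.2 K.2.1 K.2.2 K.1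
  + tm I.1 I.2.1 I.2.2 K.2.2 K.1 K.2.1 - tm I.1 I.2.1 I.2.2 K.2.2 K.2.1 K.1

/-- The integral value of the cocycle `a` at the basis triple `K`. -/
def Sv (a : Fin 7) (K : T3) : ℤ := ((Ss a).map fun x => x.1 * e3 x.2 K).sum

lemma Sv_cocycle : ∀ p q : Fin 8, p < q → ∀ r, q < r → ∀ s, r < s → ∀ a : Fin 7,
    ((d3l (p, q, r, s)).map fun x => x.1 * Sv a x.2).sum % 3 = 0 := by
  decide +kernel

lemma Sv_dual : ∀ a b : Fin 7, Sv a (Fs b) = if a = b then 1 else 0 := by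
  decide +kernel

/-! ### The basis and the evaluation of formal linear combinations -/

section final

variable (k : Type*) [Field k]

/-- Coordinates on `sl₃`. -/
def coordE : sl3 k ≃ₗ[k] (Fin 8 → k) where
  toFun A := ![A.1 0 1, A.1 0 2, A.1 1 0, A.1 1 2, A.1 2 0, A.1 2 1, A.1 0 0, A.1 1 1]
  map_add' A A' := by ext i; fin_cases i <;> simp
  map_smul' c A := by ext i; fin_cases i <;> simp
  invFun w := ⟨!![w 6, w 0, w 1; w 2, w 7, w 3; w 4, w 5, -w 6 - w 7], by
    change Matrix.trace (n := Fin 3) (R := k) _ = 0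
    simp [Matrix.trace, Fin.sum_univ_three]⟩
  left_inv A := by
    have h : Matrix.trace A.1 = 0 := A.2
    simp only [Matrix.trace, Matrix.diag, Fin.sum_univ_three] at h
    ext i j
    fin_cases i <;> fin_cases j <;> simp
    linear_combination -h
  right_inv w := by ext i; fin_cases i <;> simp

/-- Our basis of `sl₃`. -/
noncomputable def bs : Module.Basis (Fin 8) k (sl3 k) := Module.Basis.ofEquivFun (coordE k)

lemma bs_coe (i : Fin 8) : (bs k i).1 = (B i).map (Int.castRingHom k) := by
  ext a b
  fin_cases i <;> fin_cases a <;> fin_cases b <;>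
    simp [bs, coordE, B]

lemma bs_lie (i j : Fin 8) :
    ⁅bs k i, bs k j⁆ = ((br i j).map fun x => (x.1 : k) • bs k x.2).sum := by
  apply Subtype.ext
  have h := congrArg (fun M => M.map (Int.castRingHom k)) (br_spec i j)
  have h1 : ∀ l : List (ℤ × Fin 8),
      ((l.map fun x => (x.1 : k) • bs k x.2).sum).1 =
        ((l.map fun x => x.1 • B x.2).sum).map (Int.castRingHom k) := by
    intro l
    induction l with
    | nil => simp
    | cons x l ih =>
      simp only [List.map_cons, List.sum_cons]
      rw [Matrix.map_add _ (by simp), ← ih]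
      ext a b
      simp [bs_coe, -zsmul_eq_mul, Matrix.smul_apply]
  rw [h1, ← br_spec, LieAlgebra.SpecialLinear.sl_bracket, bs_coe, bs_coe,
    Matrix.map_sub _ (by simp), Matrix.map_mul, Matrix.map_mul]

variable {k}

/-- Evaluation of a formal linear combination. -/
noncomputable def ev {κ : Type} (U : κ → k) (l : List (ℤ × κ)) : k := (l.map fun x => (x.1 : k) * U x.2).sum

lemma ev_cons {κ : Type} (U : κ → k) (x : ℤ × κ) (l : List (ℤ × κ)) :
    ev U (x :: l) = (x.1 : k) * U x.2 + ev U l := by simp [ev]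

lemma ev_nil {κ : Type} (U : κ → k) : ev U [] = 0 := by simp [ev]

lemma ev_append {κ : Type} (U : κ → k) (l m : List (ℤ × κ)) :
    ev U (l ++ m) = ev U l + ev U m := by simp [ev]

lemma ev_scl {κ : Type} (U : κ → k) (c : ℤ) (l : List (ℤ × κ)) :
    ev U (scl c l) = c * ev U l := by
  induction l with
  | nil => simp [ev, scl]
  | cons x l ih =>
    have : scl c (x :: l) = (c * x.1, x.2) :: scl c l := rfl
    rw [this, ev_cons, ev_cons, ih]; push_cast; ring

lemma ev_bnd {κ κ' : Type} (U : κ' → k) (l : List (ℤ × κ)) (f : κ → List (ℤ × κ')) :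
    ev U (bnd l f) = ev (fun x => ev U (f x)) l := by
  induction l with
  | nil => simp [ev, bnd]
  | cons x l ih =>
    have : bnd (x :: l) f = scl x.1 (f x.2) ++ bnd l f := rfl
    rw [this, ev_append, ev_scl, ih, ev_cons]

/-- The values of a 3-cochain on basis triples. -/
noncomputable def val3 (ψ : sl3 k [⋀^Fin 3]→ₗ[k] k) (K : T3) : k := ψ ![bs k K.1, bs k K.2.1, bs k K.2.2]

/-- The values of a 2-cochain on basis pairs. -/
noncomputable def val2 (φ : sl3 k [⋀^Fin 2]→ₗ[k] k) (K : Fin 8 × Fin 8) : k := φ ![bs k K.1, bs k K.2]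

lemma ev_sub3 (ψ : sl3 k [⋀^Fin 3]→ₗ[k] k) (c : ℤ) (i j r s : Fin 8) :
    ev (val3 ψ) (sub c (br i j) fun x => (x, r, s)) =
      c * ψ ![⁅bs k i, bs k j⁆, bs k r, bs k s] := by
  rw [bs_lie]
  induction br i j with
  | nil => simp [sub, ev, t_zero0]
  | cons x l ih =>
    have : (sub c (x :: l) fun x => ((x, r, s) : T3)) = (c * x.1, x.2, r, s) ::
      sub c l fun x => (x, r, s) := rfl
    rw [this, ev_cons, ih, List.map_cons, List.sum_cons, t_add0, t_smul0, val3]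
    push_cast; ring

lemma ev_sub2 (φ : sl3 k [⋀^Fin 2]→ₗ[k] k) (c : ℤ) (i j r : Fin 8) :
    ev (val2 φ) (sub c (br i j) fun x => (x, r)) =
      c * φ ![⁅bs k i, bs k j⁆, bs k r] := by
  rw [bs_lie]
  induction br i j with
  | nil => simp [sub, ev, u_zero0]
  | cons x l ih =>
    have : (sub c (x :: l) fun x => ((x, r) : Fin 8 × Fin 8)) = (c * x.1, x.2, r) ::
      sub c l fun x => (x, r) := rfl
    rw [this, ev_cons, ih, List.map_cons, List.sum_cons, u_add0, u_smul0, val2]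
    push_cast; ring

lemma ev_d3l (ψ : sl3 k [⋀^Fin 3]→ₗ[k] k) (p q r s : Fin 8) :
    ev (val3 ψ) (d3l (p, q, r, s)) = D3 ψ ![bs k p, bs k q, bs k r, bs k s] := by
  change _ = -ψ ![⁅bs k p, bs k q⁆, bs k r, bs k s] + ψ ![⁅bs k p, bs k r⁆, bs k q, bs k s]
    - ψ ![⁅bs k p, bs k s⁆, bs k q, bs k r] - ψ ![⁅bs k q, bs k r⁆, bs k p, bs k s]
    + ψ ![⁅bs k q, bs k s⁆, bs k p, bs k r] - ψ ![⁅bs k r, bs k s⁆, bs k p, bs k q]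
  simp only [d3l, ev_append, ev_sub3]
  push_cast; ring

lemma ev_d2l (φ : sl3 k [⋀^Fin 2]→ₗ[k] k) (p q r : Fin 8) :
    ev (val2 φ) (d2l (p, q, r)) = val3 (D2 φ) (p, q, r) := by
  change _ = -φ ![⁅bs k p, bs k q⁆, bs k r] + φ ![⁅bs k p, bs k r⁆, bs k q]
    - φ ![⁅bs k q, bs k r⁆, bs k p]
  simp only [d2l, ev_append, ev_sub2]
  push_cast; ring

lemma ceD2 (φ : sl3 k [⋀^Fin 2]→ₗ[k] k) (v : Fin 3 → sl3 k) :
    ceD k (sl3 k) k φ v = D2 φ v := by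
  change _ = -φ ![⁅v 0, v 1⁆, v 2] + φ ![⁅v 0, v 2⁆, v 1] - φ ![⁅v 1, v 2⁆, v 0]
  have hz : ∀ (x : sl3 k) (y : k), ⁅x, y⁆ = 0 := fun _ _ => rfl
  have hc : ∀ (x : sl3 k) (f : Fin 1 → sl3 k), Fin.cons x f = ![x, f 0] := by
    intro x f; ext i : 1; fin_cases i <;> rfl
  simp only [ceD, hz, hc, smul_zero, Finset.sum_const_zero, add_zero]
  simp only [Fin.sum_univ_succ, Fin.sum_univ_zero]
  simp [Fin.succAbove]
  ring

lemma ceD3 (ψ : sl3 k [⋀^Fin 3]→ₗ[k] k) (v : Fin 4 → sl3 k) :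
    ceD k (sl3 k) k ψ v = D3 ψ v := by
  change _ = -ψ ![⁅v 0, v 1⁆, v 2, v 3] + ψ ![⁅v 0, v 2⁆, v 1, v 3] - ψ ![⁅v 0, v 3⁆, v 1, v 2]
    - ψ ![⁅v 1, v 2⁆, v 0, v 3] + ψ ![⁅v 1, v 3⁆, v 0, v 2] - ψ ![⁅v 2, v 3⁆, v 0, v 1]
  have hz : ∀ (x : sl3 k) (y : k), ⁅x, y⁆ = 0 := fun _ _ => rfl
  have hc : ∀ (x : sl3 k) (f : Fin 2 → sl3 k), Fin.cons x f = ![x, f 0, f 1] := by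
    intro x f; ext i : 1; fin_cases i <;> rfl
  simp only [ceD, hz, hc, smul_zero, Finset.sum_const_zero, add_zero]
  simp only [Fin.sum_univ_succ, Fin.sum_univ_zero]
  simp [Fin.succAbove]
  ring

/-! ### Normal forms -/

lemma s12_spec (ψ : sl3 k [⋀^Fin 3]→ₗ[k] k) (x : ℤ × T3) :
    ((s12 x).1 : k) * val3 ψ (s12 x).2 = x.1 * val3 ψ x.2 := by
  obtain ⟨c, p, q, r⟩ := x
  rcases lt_trichotomy p q with h | rfl | h
  · simp [s12, h]
  · simp [s12, val3, t_eq01]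
  · simp only [s12, h, h.not_gt, if_true, if_false, val3]
    rw [t_swap01]; push_cast; ring

lemma s23_spec (ψ : sl3 k [⋀^Fin 3]→ₗ[k] k) (x : ℤ × T3) :
    ((s23 x).1 : k) * val3 ψ (s23 x).2 = x.1 * val3 ψ x.2 := by
  obtain ⟨c, p, q, r⟩ := x
  rcases lt_trichotomy q r with h | rfl | h
  · simp [s23, h]
  · simp [s23, val3, t_eq12]
  · simp only [s23, h, h.not_gt, if_true, if_false, val3]
    rw [t_swap12]; push_cast; ring

lemma ev_ins (U : T3 → k) (x : ℤ × T3) (l : List (ℤ × T3)) :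
    ev U (ins x l) = x.1 * U x.2 + ev U l := by
  induction l with
  | nil => simp [ins, ev]
  | cons y l ih =>
    by_cases h : x.2 = y.2
    · simp only [ins, h, if_true, ev_cons]; push_cast; ring
    · simp only [ins, h, if_false, ev_cons, ih]; ring

lemma ev_nf (ψ : sl3 k [⋀^Fin 3]→ₗ[k] k) (l : List (ℤ × T3)) :
    ev (val3 ψ) (nf l) = ev (val3 ψ) l := by
  induction l with
  | nil => rfl
  | cons x l ih => rw [nf, ev_ins, s12_spec, s23_spec, s12_spec, ih, ev_cons]

lemma cast_zero_of_mod [CharP k 3] {c : ℤ} (h : c % 3 = 0) : (c : k) = 0 := by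
  rw [CharP.intCast_eq_zero_iff k 3]; exact Int.dvd_of_emod_eq_zero h

lemma ev_zero_of_mod [CharP k 3] {κ : Type} (U : κ → k) (l : List (ℤ × κ))
    (h : ∀ x ∈ l, x.1 % 3 = 0) : ev U l = 0 := by
  induction l with
  | nil => rfl
  | cons x l ih =>
    rw [ev_cons, ih fun y hy => h y (List.mem_cons_of_mem _ hy),
      cast_zero_of_mod (h x List.mem_cons_self)]
    ring

/-! ### Elementary forms -/

/-- The elementary alternating form attached to a tuple of basis indices. -/
noncomputable def E {n : ℕ} (I : Fin n → Fin 8) : sl3 k [⋀^Fin n]→ₗ[k] k :=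
  (Matrix.detRowAlternating (n := Fin n) (R := k)).compLinearMap
    ((LinearMap.funLeft k k I) ∘ₗ (bs k).equivFun.toLinearMap)

lemma dl_cast (i j : Fin 8) : ((dl i j : ℤ) : k) = if i = j then 1 else 0 := by
  by_cases h : i = j <;> simp [dl, h]

lemma E_apply {n : ℕ} (I J : Fin n → Fin 8) :
    E (k := k) I (fun r => bs k (J r)) =
      Matrix.det (Matrix.of fun r c => ((dl (I c) (J r) : ℤ) : k)) := by
  simp only [E, AlternatingMap.compLinearMap_apply, Matrix.detRowAlternating]
  change Matrix.det _ = _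
  congr 1
  ext r c
  simp [LinearMap.funLeft, Finsupp.single_apply, dl_cast, eq_comm]

lemma val2_E (x y : Fin 8) (p : Fin 8 × Fin 8) : val2 (E (k := k) ![x, y]) p =
    (dl x p.1 : k) * dl y p.2 - dl y p.1 * dl x p.2 := by
  have h : ![bs k p.1, bs k p.2] = fun r => bs k (![p.1, p.2] r) := by
    ext r : 1; fin_cases r <;> rfl
  rw [val2, h, E_apply, Matrix.det_fin_two]
  simp only [Matrix.of_apply, Matrix.cons_val]

lemma val3_E (I K : T3) : val3 (E (k := k) ![I.1, I.2.1, I.2.2]) K = e3 I K := by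
  have h : ![bs k K.1, bs k K.2.1, bs k K.2.2] = fun r => bs k (![K.1, K.2.1, K.2.2] r) := by
    ext r : 1; fin_cases r <;> rfl
  rw [val3, h, E_apply, Matrix.det_fin_three, e3]
  simp only [tm_eq]
  push_cast
  simp only [Matrix.of_apply, Matrix.cons_val]
  ring

/-! ### The homotopy -/

/-- The homotopy `C³ → C²`. -/
noncomputable def hφ (ψ : sl3 k [⋀^Fin 3]→ₗ[k] k) : sl3 k [⋀^Fin 2]→ₗ[k] k :=
  ∑ x : Fin 8, ∑ y : Fin 8, ev (val3 ψ) (look hT (x, y)) • E ![x, y]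

lemma val2_add (φ φ' : sl3 k [⋀^Fin 2]→ₗ[k] k) (p : Fin 8 × Fin 8) :
    val2 (φ + φ') p = val2 φ p + val2 φ' p := rfl

/-- Evaluation of 2-cochains as a linear map. -/
noncomputable def val2L (p : Fin 8 × Fin 8) : (sl3 k [⋀^Fin 2]→ₗ[k] k) →ₗ[k] k where
  toFun φ := val2 φ p
  map_add' _ _ := rfl
  map_smul' _ _ := rfl

/-- Evaluation of 3-cochains as a linear map. -/
noncomputable def val3L (p : T3) : (sl3 k [⋀^Fin 3]→ₗ[k] k) →ₗ[k] k where
  toFun φ := val3 φ p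
  map_add' _ _ := rfl
  map_smul' _ _ := rfl

lemma val2_hφ (ψ : sl3 k [⋀^Fin 3]→ₗ[k] k) (p : Fin 8 × Fin 8) :
    val2 (hφ ψ) p = ev (val3 ψ) (hl p) := by
  change val2L p (hφ ψ) = _
  rw [hl, ev_append, ev_scl, hφ]
  simp only [map_sum, map_smul]
  have e : ∀ x y : Fin 8, val2L p (E (k := k) ![x, y]) =
    (dl x p.1 : k) * dl y p.2 - dl y p.1 * dl x p.2 := fun x y => val2_E x y p
  simp only [e, smul_eq_mul, mul_sub, Finset.sum_sub_distrib, dl_cast]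
  simp [sub_eq_add_neg]

lemma val3_exact [CharP k 3] (ψ : sl3 k [⋀^Fin 3]→ₗ[k] k) (h : D3 ψ = 0)
    (hf : ∀ a, val3 ψ (Fs a) = 0) (i j l : Fin 8) (hij : i < j) (hjl : j < l) :
    val3 ψ (i, j, l) = val3 (D2 (hφ ψ)) (i, j, l) := by
  have h0 := ev_zero_of_mod (val3 ψ) _ (idl_spec i j hij l hjl)
  have hz : ∀ {κ : Type} (m : List (ℤ × κ)), ev (fun _ => (0 : k)) m = 0 := by
    intro κ m; simp [ev]
  have hd : (fun Q => ev (val3 ψ) (d3l Q)) = fun _ => 0 := by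
    funext ⟨p, q, r, s⟩
    rw [ev_d3l, h]; rfl
  have hF : (fun a => ev (val3 ψ) [((1 : ℤ), Fs a)]) = fun _ => 0 := by
    funext a
    simp [ev, hf]
  have h2 : (fun x => ev (val3 ψ) (hl x)) = val2 (hφ ψ) := by
    funext p; rw [val2_hφ]
  rw [ev_nf, idl, ev_cons, ev_append, ev_scl, ev_scl, ev_append, ev_bnd, ev_bnd, ev_bnd, hd, hF,
    hz, hz, h2, ev_d2l] at h0
  push_cast at h0
  linear_combination h0

lemma ext3 {ψ χ : sl3 k [⋀^Fin 3]→ₗ[k] k}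
    (h : ∀ i j l : Fin 8, i < j → j < l → val3 ψ (i, j, l) = val3 χ (i, j, l)) : ψ = χ := by
  refine ext_sorted (bs k) fun v hv => ?_
  have e : bs k ∘ v = ![bs k (v 0), bs k (v 1), bs k (v 2)] := by
    ext r : 1; fin_cases r <;> rfl
  have h01 : v 0 < v 1 := hv (by decide)
  have h12 : v 1 < v 2 := hv (by decide)
  rw [e]
  exact h (v 0) (v 1) (v 2) h01 h12

lemma exact3 [CharP k 3] (ψ : sl3 k [⋀^Fin 3]→ₗ[k] k) (h : D3 ψ = 0)
    (hf : ∀ a, val3 ψ (Fs a) = 0) : ∃ φ, ψ = D2 φ :=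
  ⟨hφ ψ, ext3 (val3_exact ψ h hf)⟩

lemma val3_D2 [CharP k 3] (φ : sl3 k [⋀^Fin 2]→ₗ[k] k) (a : Fin 7) :
    val3 (D2 φ) (Fs a) = 0 := by
  have h3 : (3 : k) = 0 := by exact_mod_cast CharP.cast_eq_zero k 3
  have hu : ∀ i, val2 φ (i, i) = 0 := fun i => u_eq φ _
  have hs : ∀ i j, val2 φ (i, j) = - val2 φ (j, i) := fun i j => u_swap φ _ _
  have he : val3 (D2 φ) (Fs a) = ev (val2 φ) (d2l (Fs a)) := (ev_d2l φ _ _ _).symm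
  have hl : ∀ a : Fin 7, d2l (Fs a) = ![[(-1, 0, 1), (2, 1, 0)], [(1, 0, 5), (-2, 5, 0)],
      [(-2, 1, 3), (1, 3, 1)], [(-1, 6, 6), (-2, 1, 4), (-2, 4, 1)], [(-1, 2, 3), (2, 3, 2)],
      [(1, 2, 4), (-2, 4, 2)], [(2, 4, 5), (-1, 5, 4)]] a := by
    decide +kernel
  rw [he, hl]
  fin_cases a <;> simp [ev, hu]
  · rw [hs 0 1]; linear_combination val2 φ (1, 0) * h3
  · rw [hs 0 5]; linear_combination -val2 φ (5, 0) * h3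
  · rw [hs 1 3]; linear_combination val2 φ (3, 1) * h3
  · rw [hs 1 4]; ring
  · rw [hs 2 3]; linear_combination val2 φ (3, 2) * h3
  · rw [hs 2 4]; linear_combination -val2 φ (4, 2) * h3
  · rw [hs 4 5]; linear_combination -val2 φ (5, 4) * h3

/-- Explicit cocycles. -/
noncomputable def sf (a : Fin 7) : sl3 k [⋀^Fin 3]→ₗ[k] k :=
  ((Ss a).map fun x => (x.1 : k) • E ![x.2.1, x.2.2.1, x.2.2.2]).sum

lemma val3_sf (a : Fin 7) (K : T3) : val3 (sf (k := k) a) K = Sv a K := by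
  change val3L K (sf (k := k) a) = _
  rw [sf, Sv]
  induction Ss a with
  | nil => simp
  | cons x l ih =>
    simp only [List.map_cons, List.sum_cons, map_add, ih, map_smul]
    have e : val3L K (E (k := k) ![x.2.1, x.2.2.1, x.2.2.2]) = e3 x.2 K := val3_E x.2 K
    rw [e, smul_eq_mul]; push_cast; ring

lemma D3_sf [CharP k 3] (a : Fin 7) : D3 (sf (k := k) a) = 0 := by
  refine ext_sorted (bs k) fun v hv => ?_
  have e : bs k ∘ v = ![bs k (v 0), bs k (v 1), bs k (v 2), bs k (v 3)] := by
    ext r : 1; fin_cases r <;> rfl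
  rw [e, ← ev_d3l, AlternatingMap.zero_apply]
  have h := cast_zero_of_mod (k := k) (Sv_cocycle (v 0) (v 1) (hv (by decide)) (v 2) (hv (by decide))
    (v 3) (hv (by decide)) a)
  rw [← h]
  induction d3l (v 0, v 1, v 2, v 3) with
  | nil => simp [ev]
  | cons x l ih => rw [ev_cons, ih, val3_sf, List.map_cons, List.sum_cons]; push_cast; ring

lemma mem_Z (ψ : sl3 k [⋀^Fin 3]→ₗ[k] k) : ψ ∈ ceZ k (sl3 k) k 3 ↔ D3 ψ = 0 := by
  constructor
  · intro h
    ext v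
    rw [← ceD3]; exact h v
  · intro h v
    rw [ceD3, h]; rfl

lemma mem_B (ψ : sl3 k [⋀^Fin 3]→ₗ[k] k) : ψ ∈ ceB k (sl3 k) k 3 ↔ ∃ φ, ψ = D2 φ := by
  constructor
  · rintro ⟨φ, h⟩
    exact ⟨φ, by ext v; rw [h v, ceD2]⟩
  · rintro ⟨φ, rfl⟩
    exact ⟨φ, fun v => (ceD2 φ v).symm⟩

/-- The seven functionals detecting the cohomology. -/
noncomputable def fL : ceZ k (sl3 k) k 3 →ₗ[k] (Fin 7 → k) :=
  (LinearMap.pi fun a => val3L (Fs a)) ∘ₗ (ceZ k (sl3 k) k 3).subtype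

lemma fL_apply (ψ : ceZ k (sl3 k) k 3) (a : Fin 7) : fL ψ a = val3 ψ.1 (Fs a) := rfl

lemma fL_ker [CharP k 3] :
    (ceB k (sl3 k) k 3).comap (ceZ k (sl3 k) k 3).subtype = LinearMap.ker (fL (k := k)) := by
  ext ψ
  rw [Submodule.mem_comap, Submodule.subtype_apply, mem_B, LinearMap.mem_ker]
  constructor
  · rintro ⟨φ, h⟩
    ext a
    rw [fL_apply, h, val3_D2]; rfl
  · intro h
    exact exact3 ψ.1 ((mem_Z _).1 ψ.2) fun a => by rw [← fL_apply, h]; rfl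

lemma fL_surj [CharP k 3] : Function.Surjective (fL (k := k)) := by
  intro w
  refine ⟨∑ a, w a • ⟨sf a, (mem_Z _).2 (D3_sf a)⟩, ?_⟩
  ext b
  rw [map_sum, Finset.sum_apply]
  have e : ∀ a : Fin 7, fL (k := k) (w a • ⟨sf a, (mem_Z _).2 (D3_sf a)⟩) b =
      w a * if a = b then 1 else 0 := by
    intro a
    rw [map_smul, Pi.smul_apply, fL_apply, val3_sf, Sv_dual, smul_eq_mul]
    push_cast
    rfl
  rw [Finset.sum_congr rfl fun a _ => e a]
  simp

end final

end H3aux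

theorem H3_trivial_coeffs_dim (k : Type*) [Field k] [IsAlgClosed k] [CharP k 3] :
    Module.finrank k (ceH k (sl3 k) k 3) = 7 := by
  exact ((Submodule.quotEquivOfEq _ _ H3aux.fL_ker).trans
    (LinearMap.quotKerEquivOfSurjective _ H3aux.fL_surj)).finrank_eq.trans (by simp)
end

section
/- Let k be an algebraically closed field of characteristic 3 and let g = sl_3(k) be the Lie algebra of traceless 3×3 matrices over k. Then the fourth Chevalley–Eilenberg cohomology of g with trivial coefficients vanishes: H^4(g, k) = 0. -/
open Module in
lemma exists_alt {k g : Type*} [Field k] [AddCommGroup g] [Module k g] {n m : ℕ}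
    (b : Basis (Fin m) k g) (f : (Fin n → Fin m) → k) :
    ∃ φ : g [⋀^Fin n]→ₗ[k] k, ∀ u : Fin n → Fin m, StrictMono u → φ (b ∘ u) = f u := by
  refine ⟨((b.exteriorPower n).constr k
    (fun s => f (Set.powersetCard.ofFinEmbEquiv.symm s))).compAlternatingMap
      (exteriorPower.ιMulti k n), fun u hu => ?_⟩
  have h := (b.exteriorPower n).constr_basis k
    (fun s => f (Set.powersetCard.ofFinEmbEquiv.symm s))
    (Set.powersetCard.ofFinEmbEquiv (OrderEmbedding.ofStrictMono u hu))
  rw [exteriorPower.basis_apply, exteriorPower.ιMulti_family] at h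
  simpa using h

lemma alt_ext {k g : Type*} [Field k] [AddCommGroup g] [Module k g] {n m : ℕ}
    (b : Module.Basis (Fin m) k g) (φ χ : g [⋀^Fin n]→ₗ[k] k)
    (h : ∀ u : Fin n → Fin m, StrictMono u → φ (b ∘ u) = χ (b ∘ u)) : φ = χ := by
  refine Module.Basis.ext_alternating b fun v hv => ?_
  have hs : StrictMono (v ∘ Tuple.sort v) :=
    (Tuple.monotone_sort v).strictMono_of_injective (hv.comp (Tuple.sort v).injective)
  have h1 := h _ hs
  have h2 := φ.map_perm (b ∘ v) (Tuple.sort v)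
  have h3 := χ.map_perm (b ∘ v) (Tuple.sort v)
  rw [← Function.comp_assoc, h2, h3] at h1
  exact smul_left_cancel _ h1

/-- The brackets of the basis elements `p < q`, written in the basis. -/
def br {V : Type*} [AddCommGroup V] (p q : Fin 8) (u : Fin 8 → V) : V :=
  match p.val, q.val with
  | 0, 1 => u 5
  | 1, 2 => u 3
  | 0, 2 => - u 4
  | 3, 4 => - u 2
  | 4, 5 => - u 0
  | 3, 5 => u 1
  | 0, 3 => u 6
  | 1, 4 => u 6 - u 7
  | 2, 5 => u 6 + u 7
  | 0, 6 => u 0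
  | 1, 6 => u 1
  | 2, 6 => u 2
  | 3, 6 => - u 3
  | 4, 6 => - u 4
  | 5, 6 => - u 5
  | _, _ => 0

lemma map_br {V W : Type*} [AddCommGroup V] [AddCommGroup W] (L : V →+ W) (p q : Fin 8)
    (u : Fin 8 → V) : L (br p q u) = br p q (L ∘ u) := by
  unfold br
  split <;> simp

lemma three_eq_zero' (k : Type*) [Field k] [CharP k 3] : (3 : k) = 0 := by
  exact_mod_cast CharP.cast_eq_zero k 3

/-- The matrix with given coordinates. -/
def mat {k : Type*} [Field k] (u : Fin 8 → k) : Matrix (Fin 3) (Fin 3) k :=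
  !![u 6 + u 7, u 0, u 5; u 3, - u 6 + u 7, u 1; u 2, u 4, u 7]

noncomputable def coordEquiv (k : Type*) [Field k] [CharP k 3] : sl3 k ≃ₗ[k] (Fin 8 → k) where
  toFun M := ![M.1 0 1, M.1 1 2, M.1 2 0, M.1 1 0, M.1 2 1, M.1 0 2, M.1 0 0 - M.1 2 2, M.1 2 2]
  map_add' M N := by
    ext i; fin_cases i <;> simp [add_sub_add_comm]
  map_smul' c M := by
    ext i; fin_cases i <;> simp [mul_sub]
  invFun u := ⟨mat u, by
    change Matrix.trace (mat u) = 0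
    rw [Matrix.trace_fin_three]
    simp [mat]
    linear_combination (u 7) * three_eq_zero' k⟩
  left_inv M := by
    have h : Matrix.trace M.1 = 0 := M.2
    rw [Matrix.trace_fin_three] at h
    apply Subtype.ext
    ext i j
    fin_cases i <;> fin_cases j <;> simp [mat]
    linear_combination (M.1 2 2) * three_eq_zero' k - h
  right_inv u := by
    ext i; fin_cases i <;> simp [mat]

noncomputable def bas (k : Type*) [Field k] [CharP k 3] : Module.Basis (Fin 8) k (sl3 k) :=
  Module.Basis.ofEquivFun (coordEquiv k)

lemma bas_val (k : Type*) [Field k] [CharP k 3] (p : Fin 8) :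
    (bas k p).1 = mat (Pi.single p 1) := by
  simp [bas, coordEquiv]

/-- The inclusion into matrices. -/
def valHom (k : Type*) [Field k] : sl3 k →+ Matrix (Fin 3) (Fin 3) k where
  toFun M := M.1
  map_zero' := rfl
  map_add' _ _ := rfl

lemma br_val (k : Type*) [Field k] [CharP k 3] (p q : Fin 8) :
    (br p q (bas k)).1 = br p q (fun r => mat (Pi.single r (1 : k))) :=
  (map_br (valHom k) p q (bas k)).trans (congrArg _ (funext fun r => bas_val k r))

set_option maxHeartbeats 4000000 in
lemma bas_lie (k : Type*) [Field k] [CharP k 3] (p q : Fin 8) (h : p < q) :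
    ⁅bas k p, bas k q⁆ = br p q (bas k) := by
  apply Subtype.ext
  rw [br_val, LieAlgebra.SpecialLinear.sl_bracket, bas_val, bas_val]
  have h3 := three_eq_zero' k
  have h2 : (2 : k) = -1 := by linear_combination h3
  fin_cases p <;> fin_cases q <;> first | exact absurd h (by decide) | skip
  all_goals
    clear h
    ext i j
    fin_cases i <;> fin_cases j <;>
      simp [mat, br] <;> grind

/-- Coordinates of the primitive: an explicit contracting homotopy in degree four. -/
def prim {k : Type*} [Field k] (A : Fin 8 → Fin 8 → Fin 8 → Fin 8 → k) (p q r : Fin 8) : k :=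
  match p.val, q.val, r.val with
  | 0, 1, 3 => - A 0 1 3 6
  | 0, 1, 4 => - A 0 1 4 6
  | 0, 1, 5 => - A 0 1 5 6
  | 0, 1, 7 => A 0 3 5 7
  | 0, 2, 3 => - A 0 2 3 6
  | 0, 2, 4 => - A 0 2 4 6
  | 0, 2, 5 => - A 0 2 5 6
  | 0, 2, 7 => A 2 4 5 7
  | 0, 3, 4 => A 0 3 4 6
  | 0, 3, 5 => A 0 3 5 6
  | 0, 3, 6 => A 0 1 2 6
  | 0, 3, 7 => A 0 1 3 4 - A 0 2 3 5
  | 0, 4, 5 => A 0 4 5 6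
  | 0, 4, 7 => A 0 2 4 5
  | 0, 5, 6 => - A 0 1 4 5
  | 1, 2, 3 => - A 1 2 3 6
  | 1, 2, 4 => - A 1 2 4 6
  | 1, 2, 5 => - A 1 2 5 6
  | 1, 2, 7 => - A 1 2 6 7
  | 1, 3, 4 => A 1 3 4 6
  | 1, 3, 5 => A 1 3 5 6
  | 1, 3, 7 => A 1 2 3 5
  | 1, 4, 5 => A 1 4 5 6
  | 1, 4, 7 => - A 0 1 2 6 - A 0 1 2 7 + A 0 2 3 5 - A 1 2 4 5
  | 1, 5, 6 => A 0 1 3 5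
  | 2, 3, 4 => A 2 3 4 6
  | 2, 3, 5 => A 2 3 5 6
  | 2, 3, 7 => A 1 2 3 4
  | 2, 4, 5 => A 2 4 5 6
  | 2, 4, 6 => A 0 2 3 4
  | 2, 5, 7 => A 0 1 2 6 - A 0 1 2 7 - A 0 1 3 4 + A 1 2 4 5
  | 3, 4, 5 => A 0 1 2 6 + A 0 1 3 4 + A 0 2 3 5
  | 3, 4, 7 => - A 0 2 3 7
  | 3, 5, 7 => - A 1 2 5 7
  | 4, 5, 7 => A 0 1 4 7
  | _, _, _ => 0

/-- The differential of a 3-cochain in coordinates. -/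
def cobThree {k : Type*} [Field k] (F : Fin 8 → Fin 8 → Fin 8 → k) (p q r s : Fin 8) : k :=
  - br p q (fun m => F m r s) + br p r (fun m => F m q s) - br p s (fun m => F m q r)
  - br q r (fun m => F m p s) + br q s (fun m => F m p r) - br r s (fun m => F m p q)

/-- The differential of a 4-cochain in coordinates. -/
def cobFour {k : Type*} [Field k] (A : Fin 8 → Fin 8 → Fin 8 → Fin 8 → k)
    (p q r s t : Fin 8) : k :=
  - br p q (fun m => A m r s t) + br p r (fun m => A m q s t) - br p s (fun m => A m q r t)
  + br p t (fun m => A m q r s) - br q r (fun m => A m p s t) + br q s (fun m => A m p r t)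
  - br q t (fun m => A m p r s) - br r s (fun m => A m p q t) + br r t (fun m => A m p q s)
  - br s t (fun m => A m p q r)

set_option maxHeartbeats 8000000 in
lemma key {k : Type*} [Field k] [CharP k 3] (A : Fin 8 → Fin 8 → Fin 8 → Fin 8 → k)
    (a1 : ∀ p q r s, q < p → A p q r s = - A q p r s)
    (a2 : ∀ p q r s, r < q → A p q r s = - A p r q s)
    (a3 : ∀ p q r s, s < r → A p q r s = - A p q s r)
    (a4 : ∀ p r s, A p p r s = 0) (a5 : ∀ p q s, A p q q s = 0) (a6 : ∀ p q r, A p q r r = 0)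
    (hA : ∀ p q r s t, p < q → q < r → r < s → s < t → cobFour A p q r s t = 0)
    (F : Fin 8 → Fin 8 → Fin 8 → k)
    (f1 : ∀ p q r, q < p → F p q r = - F q p r)
    (f2 : ∀ p q r, r < q → F p q r = - F p r q)
    (f3 : ∀ p r, F p p r = 0) (f4 : ∀ p q, F p q q = 0)
    (hF : ∀ p q r, p < q → q < r → F p q r = prim A p q r)
    (p q r s : Fin 8) (h1 : p < q) (h2 : q < r) (h3 : r < s) :
    A p q r s = cobThree F p q r s := by
  have c3 := three_eq_zero' k
  have e01234 := hA 0 1 2 3 4 (by decide) (by decide) (by decide) (by decide)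
  have e01236 := hA 0 1 2 3 6 (by decide) (by decide) (by decide) (by decide)
  have e01246 := hA 0 1 2 4 6 (by decide) (by decide) (by decide) (by decide)
  have e01247 := hA 0 1 2 4 7 (by decide) (by decide) (by decide) (by decide)
  have e01257 := hA 0 1 2 5 7 (by decide) (by decide) (by decide) (by decide)
  have e01267 := hA 0 1 2 6 7 (by decide) (by decide) (by decide) (by decide)
  have e01345 := hA 0 1 3 4 5 (by decide) (by decide) (by decide) (by decide)
  have e01346 := hA 0 1 3 4 6 (by decide) (by decide) (by decide) (by decide)
  have e01347 := hA 0 1 3 4 7 (by decide) (by decide) (by decide) (by decide)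
  have e01357 := hA 0 1 3 5 7 (by decide) (by decide) (by decide) (by decide)
  have e01367 := hA 0 1 3 6 7 (by decide) (by decide) (by decide) (by decide)
  have e01457 := hA 0 1 4 5 7 (by decide) (by decide) (by decide) (by decide)
  have e01467 := hA 0 1 4 6 7 (by decide) (by decide) (by decide) (by decide)
  have e01567 := hA 0 1 5 6 7 (by decide) (by decide) (by decide) (by decide)
  have e02347 := hA 0 2 3 4 7 (by decide) (by decide) (by decide) (by decide)
  have e02356 := hA 0 2 3 5 6 (by decide) (by decide) (by decide) (by decide)
  have e02367 := hA 0 2 3 6 7 (by decide) (by decide) (by decide) (by decide)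
  have e02457 := hA 0 2 4 5 7 (by decide) (by decide) (by decide) (by decide)
  have e02467 := hA 0 2 4 6 7 (by decide) (by decide) (by decide) (by decide)
  have e03456 := hA 0 3 4 5 6 (by decide) (by decide) (by decide) (by decide)
  have e03457 := hA 0 3 4 5 7 (by decide) (by decide) (by decide) (by decide)
  have e03567 := hA 0 3 5 6 7 (by decide) (by decide) (by decide) (by decide)
  have e04567 := hA 0 4 5 6 7 (by decide) (by decide) (by decide) (by decide)
  have e12346 := hA 1 2 3 4 6 (by decide) (by decide) (by decide) (by decide)
  have e12356 := hA 1 2 3 5 6 (by decide) (by decide) (by decide) (by decide)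
  have e12367 := hA 1 2 3 6 7 (by decide) (by decide) (by decide) (by decide)
  have e12456 := hA 1 2 4 5 6 (by decide) (by decide) (by decide) (by decide)
  have e12567 := hA 1 2 5 6 7 (by decide) (by decide) (by decide) (by decide)
  have e13456 := hA 1 3 4 5 6 (by decide) (by decide) (by decide) (by decide)
  have e13467 := hA 1 3 4 6 7 (by decide) (by decide) (by decide) (by decide)
  have e13567 := hA 1 3 5 6 7 (by decide) (by decide) (by decide) (by decide)
  have e23457 := hA 2 3 4 5 7 (by decide) (by decide) (by decide) (by decide)
  have e23467 := hA 2 3 4 6 7 (by decide) (by decide) (by decide) (by decide)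
  have e23567 := hA 2 3 5 6 7 (by decide) (by decide) (by decide) (by decide)
  have e24567 := hA 2 4 5 6 7 (by decide) (by decide) (by decide) (by decide)
  have e34567 := hA 3 4 5 6 7 (by decide) (by decide) (by decide) (by decide)
  simp [cobFour, br, a1, a2, a3, a4, a5, a6] at e01234 e01236 e01246 e01247 e01257 e01267 e01345 e01346 e01347 e01357 e01367 e01457 e01467 e01567 e02347 e02356 e02367 e02457 e02467 e03456 e03457 e03567 e04567 e12346 e12356 e12367 e12456 e12567 e13456 e13467 e13567 e23457 e23467 e23567 e24567 e34567
  have E := (⟨c3, e01234, e01236, e01246, e01247, e01257, e01267, e01345, e01346, e01347, e01357, e01367, e01457, e01467, e01567, e02347, e02356, e02367, e02457, e02467, e03456, e03457, e03567, e04567, e12346, e12356, e12367, e12456, e12567, e13456, e13467, e13567, e23457, e23467, e23567, e24567, e34567⟩ : _ ∧ _ ∧ _ ∧ _ ∧ _ ∧ _ ∧ _ ∧ _ ∧ _ ∧ _ ∧ _ ∧ _ ∧ _ ∧ _ ∧ _ ∧ _ ∧ _ ∧ _ ∧ _ ∧ _ ∧ _ ∧ _ ∧ _ ∧ _ ∧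 _ ∧ _ ∧ _ ∧ _ ∧ _ ∧ _ ∧ _ ∧ _ ∧ _ ∧ _ ∧ _ ∧ _ ∧ _)
  clear c3 e01234 e01236 e01246 e01247 e01257 e01267 e01345 e01346 e01347 e01357 e01367 e01457 e01467 e01567 e02347 e02356 e02367 e02457 e02467 e03456 e03457 e03567 e04567 e12346 e12356 e12367 e12456 e12567 e13456 e13467 e13567 e23457 e23467 e23567 e24567 e34567
  fin_cases p <;> fin_cases q <;> first | exact absurd h1 (by decide) | skip
  all_goals (fin_cases r <;> first | exact absurd h2 (by decide) | skip)
  all_goals (fin_cases s <;> first | exact absurd h3 (by decide) | skip)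
  all_goals
    clear h1 h2 h3
    simp only [cobThree]
    simp [br, f1, f2, f3, f4]
    try simp [hF, prim]
  all_goals
    clear hA a1 a2 a3 a4 a5 a6 f1 f2 f3 f4 hF
    grind

section Expand

variable {k g : Type*} [Field k] [LieRing g] [LieAlgebra k g]

lemma cons_three {V : Type*} (a : V) (f : Fin 2 → V) :
    (Fin.cons a f : Fin 3 → V) = ![a, f 0, f 1] := by
  ext i; fin_cases i <;> rfl

lemma cons_four {V : Type*} (a : V) (f : Fin 3 → V) :
    (Fin.cons a f : Fin 4 → V) = ![a, f 0, f 1, f 2] := by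
  ext i; fin_cases i <;> rfl

/-- The differential of a 3-cochain with trivial coefficients, written out. -/
def dThree (φ : g [⋀^Fin 3]→ₗ[k] k) (v : Fin 4 → g) : k :=
  - φ ![⁅v 0, v 1⁆, v 2, v 3] + φ ![⁅v 0, v 2⁆, v 1, v 3] - φ ![⁅v 0, v 3⁆, v 1, v 2]
  - φ ![⁅v 1, v 2⁆, v 0, v 3] + φ ![⁅v 1, v 3⁆, v 0, v 2] - φ ![⁅v 2, v 3⁆, v 0, v 1]

/-- The differential of a 4-cochain with trivial coefficients, written out. -/
def dFour (ψ : g [⋀^Fin 4]→ₗ[k] k) (v : Fin 5 → g) : k :=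
  - ψ ![⁅v 0, v 1⁆, v 2, v 3, v 4] + ψ ![⁅v 0, v 2⁆, v 1, v 3, v 4]
  - ψ ![⁅v 0, v 3⁆, v 1, v 2, v 4] + ψ ![⁅v 0, v 4⁆, v 1, v 2, v 3]
  - ψ ![⁅v 1, v 2⁆, v 0, v 3, v 4] + ψ ![⁅v 1, v 3⁆, v 0, v 2, v 4]
  - ψ ![⁅v 1, v 4⁆, v 0, v 2, v 3] - ψ ![⁅v 2, v 3⁆, v 0, v 1, v 4]
  + ψ ![⁅v 2, v 4⁆, v 0, v 1, v 3] - ψ ![⁅v 3, v 4⁆, v 0, v 1, v 2]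

lemma alt3_lin (φ : g [⋀^Fin 3]→ₗ[k] k) :
    (∀ a b c, φ ![a, b, c] = - φ ![b, a, c]) ∧ (∀ a b c, φ ![a, b, c] = - φ ![a, c, b]) := by
  refine ⟨fun a b c => ?_, fun a b c => ?_⟩
  · have h := φ.map_swap ![b, a, c] (show (0 : Fin 3) ≠ 1 by decide)
    rw [← h]; congr 1; ext i; fin_cases i <;> rfl
  · have h := φ.map_swap ![a, c, b] (show (1 : Fin 3) ≠ 2 by decide)
    rw [← h]; congr 1; ext i; fin_cases i <;> rfl

lemma alt4_swap (φ : g [⋀^Fin 4]→ₗ[k] k) :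
    (∀ a b c d, φ ![a, b, c, d] = - φ ![b, a, c, d]) ∧
    (∀ a b c d, φ ![a, b, c, d] = - φ ![a, c, b, d]) ∧
    (∀ a b c d, φ ![a, b, c, d] = - φ ![a, b, d, c]) := by
  refine ⟨fun a b c d => ?_, fun a b c d => ?_, fun a b c d => ?_⟩
  · have h := φ.map_swap ![b, a, c, d] (show (0 : Fin 4) ≠ 1 by decide)
    rw [← h]; congr 1; ext i; fin_cases i <;> rfl
  · have h := φ.map_swap ![a, c, b, d] (show (1 : Fin 4) ≠ 2 by decide)
    rw [← h]; congr 1; ext i; fin_cases i <;> rfl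
  · have h := φ.map_swap ![a, b, d, c] (show (2 : Fin 4) ≠ 3 by decide)
    rw [← h]; congr 1; ext i; fin_cases i <;> rfl

lemma alt3_add (φ : g [⋀^Fin 3]→ₗ[k] k) (a x b c : g) :
    φ ![a + x, b, c] = φ ![a, b, c] + φ ![x, b, c] := φ.map_vecCons_add _ _ _

lemma alt3_smul (φ : g [⋀^Fin 3]→ₗ[k] k) (t : k) (a b c : g) :
    φ ![t • a, b, c] = t * φ ![a, b, c] := φ.map_vecCons_smul _ _ _

lemma alt3_add2 (φ : g [⋀^Fin 3]→ₗ[k] k) (a x b c : g) :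
    φ ![b, a + x, c] = φ ![b, a, c] + φ ![b, x, c] := by
  have h := (alt3_lin φ).1
  rw [h, alt3_add, h b a, h b x]; ring

lemma alt3_smul2 (φ : g [⋀^Fin 3]→ₗ[k] k) (t : k) (a b c : g) :
    φ ![b, t • a, c] = t * φ ![b, a, c] := by
  have h := (alt3_lin φ).1
  rw [h, alt3_smul, h b a]; ring

lemma alt3_add3 (φ : g [⋀^Fin 3]→ₗ[k] k) (a x b c : g) :
    φ ![b, c, a + x] = φ ![b, c, a] + φ ![b, c, x] := by
  have h := (alt3_lin φ).2
  rw [h, alt3_add2, h b c a, h b c x]; ring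

lemma alt3_smul3 (φ : g [⋀^Fin 3]→ₗ[k] k) (t : k) (a b c : g) :
    φ ![b, c, t • a] = t * φ ![b, c, a] := by
  have h := (alt3_lin φ).2
  rw [h, alt3_smul2, h b c a]; ring

lemma alt3_zero (φ : g [⋀^Fin 3]→ₗ[k] k) (b c : g) : φ ![0, b, c] = 0 := by
  simpa using alt3_smul φ 0 0 b c

lemma alt3_self (φ : g [⋀^Fin 3]→ₗ[k] k) (a c : g) :
    φ ![a, a, c] = 0 ∧ φ ![c, a, a] = 0 :=
  ⟨φ.map_eq_zero_of_eq _ (i := 0) (j := 1) rfl (by decide),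
   φ.map_eq_zero_of_eq _ (i := 1) (j := 2) rfl (by decide)⟩

lemma alt4_self (φ : g [⋀^Fin 4]→ₗ[k] k) (a c d : g) :
    φ ![a, a, c, d] = 0 ∧ φ ![c, a, a, d] = 0 ∧ φ ![c, d, a, a] = 0 :=
  ⟨φ.map_eq_zero_of_eq _ (i := 0) (j := 1) rfl (by decide),
   φ.map_eq_zero_of_eq _ (i := 1) (j := 2) rfl (by decide),
   φ.map_eq_zero_of_eq _ (i := 2) (j := 3) rfl (by decide)⟩

lemma alt3_skew (φ : g [⋀^Fin 3]→ₗ[k] k) (a b c d : g) :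
    φ ![⁅a, b⁆, c, d] = - φ ![⁅b, a⁆, c, d] := by
  have h := alt3_smul φ (-1) ⁅b, a⁆ c d
  rw [neg_one_smul, lie_skew] at h
  rw [h]; ring

/-- The differential of a 3-cochain, as an alternating map. -/
def dAlt (φ : g [⋀^Fin 3]→ₗ[k] k) : g [⋀^Fin 4]→ₗ[k] k where
  toFun := dThree φ
  map_update_add' := by
    intro inst m i x y
    obtain rfl : inst = instDecidableEqFin 4 := Subsingleton.elim _ _
    fin_cases i <;>
      simp [dThree, alt3_add, alt3_add2, alt3_add3] <;> ring
  map_update_smul' := by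
    intro inst m i c x
    obtain rfl : inst = instDecidableEqFin 4 := Subsingleton.elim _ _
    fin_cases i <;>
      simp [dThree, alt3_smul, alt3_smul2, alt3_smul3] <;> ring
  map_eq_zero_of_eq' := by
    intro v i j hv hij
    have h1 := (alt3_lin φ).2
    have h2 := alt3_skew φ
    have h3 : ∀ a c, φ ![c, a, a] = 0 := fun a c => (alt3_self φ a c).2
    have h4 : ∀ a c d, φ ![⁅a, a⁆, c, d] = 0 := fun a c d => by rw [lie_self, alt3_zero]
    have key : ∀ a b c d : g, (a = b ∨ a = c ∨ a = d ∨ b = c ∨ b = d ∨ c = d) →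
        - φ ![⁅a, b⁆, c, d] + φ ![⁅a, c⁆, b, d] - φ ![⁅a, d⁆, b, c]
        - φ ![⁅b, c⁆, a, d] + φ ![⁅b, d⁆, a, c] - φ ![⁅c, d⁆, a, b] = 0 := by
      rintro a b c d (rfl | rfl | rfl | rfl | rfl | rfl)
      · rw [h4, h3]; ring
      · rw [h4, h3, h2 b a, h1 _ b a]; ring
      · rw [h4, h3, h2 c a a b, h2 b a, h1 _ a c, h1 _ b a]; ring
      · rw [h4, h3]; ring
      · rw [h4, h3, h2 c b, h1 _ c b]; ring
      · rw [h4, h3]; ring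
    have hc : v 0 = v 1 ∨ v 0 = v 2 ∨ v 0 = v 3 ∨ v 1 = v 2 ∨ v 1 = v 3 ∨ v 2 = v 3 := by
      fin_cases i <;> fin_cases j <;> simp at hv hij ⊢ <;> simp [hv]
    exact key _ _ _ _ hc

end Expand


lemma ceD_three {k : Type*} [Field k] (φ : sl3 k [⋀^Fin 3]→ₗ[k] k) (v : Fin 4 → sl3 k) :
    ceD k (sl3 k) k φ v = dThree φ v := by
  have hz : ∀ (x : sl3 k) (c : k), ⁅x, c⁆ = 0 := fun _ _ => rfl
  have e : Fin.succAbove (1 : Fin 4) 2 = 3 := rfl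
  simp only [ceD, hz, smul_zero, Finset.sum_const_zero, add_zero, cons_three]
  simp [dThree, Fin.sum_univ_succ, e]
  ring

lemma ceD_four {k : Type*} [Field k] (φ : sl3 k [⋀^Fin 4]→ₗ[k] k) (v : Fin 5 → sl3 k) :
    ceD k (sl3 k) k φ v = dFour φ v := by
  have hz : ∀ (x : sl3 k) (c : k), ⁅x, c⁆ = 0 := fun _ _ => rfl
  have e1 : Fin.succAbove (1 : Fin 4) 2 = 3 := rfl
  have e2 : Fin.succAbove (2 : Fin 4) 2 = 3 := rfl
  have e3 : Fin.succAbove (3 : Fin 4) 2 = 2 := rfl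
  have e4 : Fin.succAbove (1 : Fin 5) 3 = 4 := rfl
  have e5 : Fin.succAbove (1 : Fin 5) 2 = 3 := rfl
  have e6 : Fin.succAbove (2 : Fin 5) 3 = 4 := rfl
  have e7 : Fin.succAbove (2 : Fin 5) 2 = 3 := rfl
  have e8 : Fin.succAbove (3 : Fin 5) 2 = 2 := rfl
  simp only [ceD, hz, smul_zero, Finset.sum_const_zero, add_zero, cons_four]
  simp [dFour, Fin.sum_univ_succ, e1, e2, e3, e4, e5, e6, e7, e8]
  ring

lemma lin3_br {k : Type*} [Field k] [CharP k 3] (φ : sl3 k [⋀^Fin 3]→ₗ[k] k) (p q : Fin 8)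
    (h : p < q) (c d : sl3 k) :
    φ ![⁅bas k p, bas k q⁆, c, d] = br p q (fun m => φ ![bas k m, c, d]) := by
  rw [bas_lie k p q h]
  exact map_br (AddMonoidHom.mk' (fun x => φ ![x, c, d]) fun x y => alt3_add φ x y c d) p q (bas k)

lemma lin4_br {k : Type*} [Field k] [CharP k 3] (φ : sl3 k [⋀^Fin 4]→ₗ[k] k) (p q : Fin 8)
    (h : p < q) (c d e : sl3 k) :
    φ ![⁅bas k p, bas k q⁆, c, d, e] = br p q (fun m => φ ![bas k m, c, d, e]) := by
  rw [bas_lie k p q h]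
  exact map_br (AddMonoidHom.mk' (fun x => φ ![x, c, d, e])
    fun x y => φ.map_vecCons_add _ x y) p q (bas k)

lemma cocycle_coords {k : Type*} [Field k] [CharP k 3] (ψ : sl3 k [⋀^Fin 4]→ₗ[k] k)
    (hψ : ∀ v, dFour ψ v = 0) (p q r s t : Fin 8) (h1 : p < q) (h2 : q < r) (h3 : r < s)
    (h4 : s < t) :
    cobFour (fun p q r s => ψ ![bas k p, bas k q, bas k r, bas k s]) p q r s t = 0 := by
  have h := hψ ![bas k p, bas k q, bas k r, bas k s, bas k t]
  rw [← h]
  change cobFour _ p q r s t = - ψ ![⁅bas k p, bas k q⁆, bas k r, bas k s, bas k t]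
    + ψ ![⁅bas k p, bas k r⁆, bas k q, bas k s, bas k t]
    - ψ ![⁅bas k p, bas k s⁆, bas k q, bas k r, bas k t]
    + ψ ![⁅bas k p, bas k t⁆, bas k q, bas k r, bas k s]
    - ψ ![⁅bas k q, bas k r⁆, bas k p, bas k s, bas k t]
    + ψ ![⁅bas k q, bas k s⁆, bas k p, bas k r, bas k t]
    - ψ ![⁅bas k q, bas k t⁆, bas k p, bas k r, bas k s]
    - ψ ![⁅bas k r, bas k s⁆, bas k p, bas k q, bas k t]
    + ψ ![⁅bas k r, bas k t⁆, bas k p, bas k q, bas k s]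
    - ψ ![⁅bas k s, bas k t⁆, bas k p, bas k q, bas k r]
  rw [lin4_br ψ p q h1, lin4_br ψ q r h2, lin4_br ψ r s h3, lin4_br ψ s t h4,
    lin4_br ψ p r (h1.trans h2), lin4_br ψ q s (h2.trans h3), lin4_br ψ r t (h3.trans h4),
    lin4_br ψ p s (h1.trans (h2.trans h3)), lin4_br ψ q t (h2.trans (h3.trans h4)),
    lin4_br ψ p t (h1.trans (h2.trans (h3.trans h4)))]
  rfl

lemma strictMono_triple {p q r : Fin 8} (h1 : p < q) (h2 : q < r) : StrictMono ![p, q, r] := by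
  rw [Fin.strictMono_iff_lt_succ]
  intro i
  fin_cases i
  · exact h1
  · exact h2

lemma comp_three {V : Type*} (b : Fin 8 → V) (u : Fin 3 → Fin 8) :
    b ∘ u = ![b (u 0), b (u 1), b (u 2)] := by
  ext1 i; fin_cases i <;> rfl

lemma comp_four {V : Type*} (b : Fin 8 → V) (u : Fin 4 → Fin 8) :
    b ∘ u = ![b (u 0), b (u 1), b (u 2), b (u 3)] := by
  ext1 i; fin_cases i <;> rfl

lemma dAlt_coords {k : Type*} [Field k] [CharP k 3] (φ : sl3 k [⋀^Fin 3]→ₗ[k] k)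
    (p q r s : Fin 8) (h1 : p < q) (h2 : q < r) (h3 : r < s) :
    dAlt φ ![bas k p, bas k q, bas k r, bas k s] =
      cobThree (fun p q r => φ ![bas k p, bas k q, bas k r]) p q r s := by
  change - φ ![⁅bas k p, bas k q⁆, bas k r, bas k s] + φ ![⁅bas k p, bas k r⁆, bas k q, bas k s]
    - φ ![⁅bas k p, bas k s⁆, bas k q, bas k r] - φ ![⁅bas k q, bas k r⁆, bas k p, bas k s]
    + φ ![⁅bas k q, bas k s⁆, bas k p, bas k r] - φ ![⁅bas k r, bas k s⁆, bas k p, bas k q] = _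
  rw [lin3_br φ p q h1, lin3_br φ q r h2, lin3_br φ r s h3, lin3_br φ p r (h1.trans h2),
    lin3_br φ q s (h2.trans h3), lin3_br φ p s (h1.trans (h2.trans h3))]
  rfl

lemma coords_eq {k : Type*} [Field k] [CharP k 3] (ψ : sl3 k [⋀^Fin 4]→ₗ[k] k)
    (hψ : ∀ v, dFour ψ v = 0) (φ : sl3 k [⋀^Fin 3]→ₗ[k] k)
    (hφ : ∀ p q r, p < q → q < r → φ ![bas k p, bas k q, bas k r] =
      prim (fun p q r s => ψ ![bas k p, bas k q, bas k r, bas k s]) p q r)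
    (p q r s : Fin 8) (h1 : p < q) (h2 : q < r) (h3 : r < s) :
    ψ ![bas k p, bas k q, bas k r, bas k s] =
      cobThree (fun p q r => φ ![bas k p, bas k q, bas k r]) p q r s := by
  have s4 := alt4_swap ψ
  have s3 := alt3_lin φ
  exact key (fun p q r s => ψ ![bas k p, bas k q, bas k r, bas k s])
    (fun _ _ _ _ _ => s4.1 _ _ _ _) (fun _ _ _ _ _ => s4.2.1 _ _ _ _)
    (fun _ _ _ _ _ => s4.2.2 _ _ _ _) (fun _ _ _ => (alt4_self ψ _ _ _).1)
    (fun _ _ _ => (alt4_self ψ _ _ _).2.1) (fun _ _ _ => (alt4_self ψ _ _ _).2.2)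
    (cocycle_coords ψ hψ) (fun p q r => φ ![bas k p, bas k q, bas k r])
    (fun _ _ _ _ => s3.1 _ _ _) (fun _ _ _ _ => s3.2 _ _ _)
    (fun _ _ => (alt3_self φ _ _).1) (fun _ _ => (alt3_self φ _ _).2) hφ p q r s h1 h2 h3

lemma exists_primitive {k : Type*} [Field k] [CharP k 3] (ψ : sl3 k [⋀^Fin 4]→ₗ[k] k)
    (hψ : ∀ v, dFour ψ v = 0) : ∃ φ : sl3 k [⋀^Fin 3]→ₗ[k] k, ∀ v, ψ v = dThree φ v := by
  obtain ⟨φ, hφ⟩ := exists_alt (bas k) (fun u : Fin 3 → Fin 8 =>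
    prim (fun p q r s => ψ ![bas k p, bas k q, bas k r, bas k s]) (u 0) (u 1) (u 2))
  have hφs : ∀ p q r, p < q → q < r → φ ![bas k p, bas k q, bas k r] =
      prim (fun p q r s => ψ ![bas k p, bas k q, bas k r, bas k s]) p q r := by
    intro p q r h1 h2
    have h := hφ ![p, q, r] (strictMono_triple h1 h2)
    rw [comp_three] at h
    exact h
  refine ⟨φ, fun v => ?_⟩
  suffices h : ψ = dAlt φ from DFunLike.congr_fun h v
  refine alt_ext (bas k) _ _ fun u hu => ?_
  have u1 : u 0 < u 1 := hu (by decide)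
  have u2 : u 1 < u 2 := hu (by decide)
  have u3 : u 2 < u 3 := hu (by decide)
  rw [comp_four, dAlt_coords φ _ _ _ _ u1 u2 u3]
  exact coords_eq ψ hψ φ hφs _ _ _ _ u1 u2 u3

theorem H4_trivial_coeffs_vanishes (k : Type*) [Field k] [IsAlgClosed k] [CharP k 3] :
    Subsingleton (ceH k (sl3 k) k 4) := by
  refine Submodule.Quotient.subsingleton_iff.2 (eq_top_iff.2 ?_)
  rintro ⟨ψ, hψ⟩ -
  obtain ⟨φ, hφ⟩ := exists_primitive ψ (fun v => by rw [← ceD_four]; exact hψ v)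
  exact ⟨φ, fun v => by rw [ceD_three]; exact hφ v⟩
end
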